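/- Let m̂ ∈ P₂(ℝ^d), R ≥ 0, δ > 0 and u ∈ U. Let m : [s, s+τ] → P₂(ℝ^d) be a W₂-continuous solution of the continuity equation ∂_t m_t + div(f(x,m_t,u)m_t) = 0 with constant control u, with m_s ∈ B_R(m̂) and 0 < τ < δ, and for z ∈ ℝ^d let t ↦ X(s,z,t) denote the solution of the ODE ẋ(t) = f(x(t), m_t, u) with x(s) = z. Then for all t ∈ [s, s+τ]: (∫_{ℝ^d} ‖f(X(s,z,t), m_t, u) − f(z, m_s, u)‖² dm_s(z))^{1/2} ≤ C₃(R)·(t − s), where C₂(R) = C₁e^{C₁δ}(1 + 2(C₁δ + ς₂(m̂) + R)e^{2C₁δ}) and C₃(R) = C₀(C₁e^{C₁δ}(1 + 2(C₁δ + ς₂(m̂) + R)e^{2C₁δ}) + C₂(R)). -/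

import Mathlib

open MeasureTheory Set Filter Topology
open scoped ENNReal NNReal InnerProductSpace

noncomputable section

/-- `ℝ^d` with the Euclidean structure. -/
abbrev Ed (d : ℕ) : Type := EuclideanSpace ℝ (Fin d)

/-- A Borel probability measure with finite second moment. -/
def IsP2Meas {E : Type*} [NormedAddCommGroup E] [MeasurableSpace E] (μ : Measure E) : Prop :=
  IsProbabilityMeasure μ ∧ ∫⁻ x, (‖x‖₊ : ℝ≥0∞) ^ 2 ∂μ < ⊤

/-- The Wasserstein space `P₂(ℝ^d)` of Borel probability measures with finite second moment. -/
def P2 (d : ℕ) : Type := {μ : Measure (Ed d) // IsP2Meas μ}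

/-- `ς₂(μ)`, the square root of the second moment of `μ`. -/
def varsigma2 {d : ℕ} (μ : P2 d) : ℝ :=
  Real.sqrt (∫⁻ x, (‖x‖₊ : ℝ≥0∞) ^ 2 ∂μ.1).toReal

/-- `π` is a plan (coupling) between `μ` and `ν`. -/
def IsCoupling {d : ℕ} (π : Measure (Ed d × Ed d)) (μ ν : P2 d) : Prop :=
  π.map Prod.fst = μ.1 ∧ π.map Prod.snd = ν.1

/-- The quadratic transport cost of a plan. -/
def Wcost {d : ℕ} (π : Measure (Ed d × Ed d)) : ℝ≥0∞ :=
  ∫⁻ p, (‖p.1 - p.2‖₊ : ℝ≥0∞) ^ 2 ∂π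

/-- The 2-Wasserstein distance. -/
def W2 {d : ℕ} (μ ν : P2 d) : ℝ :=
  Real.sqrt (⨅ π ∈ {π : Measure (Ed d × Ed d) | IsCoupling π μ ν}, Wcost π).toReal

/-- `π ∈ Π_o(μ,ν)` : an optimal plan between `μ` and `ν`. -/
def IsOptPlan {d : ℕ} (π : Measure (Ed d × Ed d)) (μ ν : P2 d) : Prop :=
  IsCoupling π μ ν ∧ ∀ π' : Measure (Ed d × Ed d), IsCoupling π' μ ν → Wcost π ≤ Wcost π'

/-- The closed Wasserstein ball `B_R(m̂)`. -/
def ballW {d : ℕ} (mhat : P2 d) (R : ℝ) : Set (P2 d) := {μ | W2 mhat μ ≤ R}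

/-- The open Wasserstein ball `O_R(m̂)`. -/
def oballW {d : ℕ} (mhat : P2 d) (R : ℝ) : Set (P2 d) := {μ | W2 mhat μ < R}

/-- The Dirac measure at the origin as an element of `P₂(ℝ^d)`. -/
def dirac0 (d : ℕ) : P2 d :=
  ⟨Measure.dirac 0, ⟨by infer_instance, by rw [lintegral_dirac]; simp⟩⟩

/-- The class `UC_m̂` : nonnegative, uniformly continuous on every bounded set,
positive-definite at `m̂`. -/
structure UCmem {d : ℕ} (mhat : P2 d) (φ : P2 d → ℝ) : Prop where
  nonneg : ∀ μ : P2 d, 0 ≤ φ μ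
  unif_cont : ∀ R > (0 : ℝ), ∀ η > (0 : ℝ), ∃ δ > (0 : ℝ), ∀ μ ν : P2 d,
    W2 mhat μ ≤ R → W2 mhat ν ≤ R → W2 μ ν ≤ δ → |φ μ - φ ν| ≤ η
  zero_at : φ mhat = 0
  pos_off : ∀ μ : P2 d, μ ≠ mhat → 0 < φ μ

/-- The inf-convolution `φ_κ`. -/
def infConv {d : ℕ} (φ : P2 d → ℝ) (κ : ℝ) (m : P2 d) : ℝ :=
  ⨅ μ : P2 d, (φ μ + 1 / (2 * κ ^ 2) * W2 m μ ^ 2)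

/-- `S(R) = sup_{μ ∈ B_R(m̂)} φ(μ)`. -/
def Sfun {d : ℕ} (mhat : P2 d) (φ : P2 d → ℝ) (R : ℝ) : ℝ := sSup (φ '' ballW mhat R)

/-- `I(R) = inf_{μ ∉ O_R(m̂)} φ(μ)`. -/
def Ifun {d : ℕ} (mhat : P2 d) (φ : P2 d → ℝ) (R : ℝ) : ℝ := sInf (φ '' (oballW mhat R)ᶜ)

/-- `G_R = {μ : φ(μ) ≤ I(R)/2}`. -/
def Gset {d : ℕ} (mhat : P2 d) (φ : P2 d → ℝ) (R : ℝ) : Set (P2 d) :=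
  {μ | φ μ ≤ Ifun mhat φ R / 2}

/-- `G_R^κ = {μ : φ_κ(μ) ≤ I(R)/2}`. -/
def GsetK {d : ℕ} (mhat : P2 d) (φ : P2 d → ℝ) (κ R : ℝ) : Set (P2 d) :=
  {μ | infConv φ κ μ ≤ Ifun mhat φ R / 2}

/-- `𝓡(R) = sup{r ≥ 0 : B_r(m̂) ⊆ G_R}`. -/
def Rfun {d : ℕ} (mhat : P2 d) (φ : P2 d → ℝ) (R : ℝ) : ℝ :=
  sSup {r : ℝ | 0 ≤ r ∧ ballW mhat r ⊆ Gset mhat φ R}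

/-- `M_κ^ε(R) = κ√(2S(R)+ε²κ²) − εκ²`. -/
def Mke {d : ℕ} (mhat : P2 d) (φ : P2 d → ℝ) (κ ε R : ℝ) : ℝ :=
  κ * Real.sqrt (2 * Sfun mhat φ R + ε ^ 2 * κ ^ 2) - ε * κ ^ 2

/-- `M^ε(R) = R + √(2S(R)+ε²)`. -/
def Me {d : ℕ} (mhat : P2 d) (φ : P2 d → ℝ) (ε R : ℝ) : ℝ :=
  R + Real.sqrt (2 * Sfun mhat φ R + ε ^ 2)

/-- `ω_R^ε(δ)`, the modulus of continuity of `φ` on `B_{M^ε(R)}(m̂)`. -/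
def omegaR {d : ℕ} (mhat : P2 d) (φ : P2 d → ℝ) (ε R δ : ℝ) : ℝ :=
  sSup {c : ℝ | ∃ ν₁ ν₂ : P2 d, W2 ν₁ ν₂ ≤ δ ∧ W2 mhat ν₁ ≤ Me mhat φ ε R ∧
    W2 mhat ν₂ ≤ Me mhat φ ε R ∧ c = |φ ν₁ - φ ν₂|}

/-- `K_κ^ε(R) = εκ² + κ√(ε²κ² + 2ω_R^ε(M_κ^ε(R)))`. -/
def Kke {d : ℕ} (mhat : P2 d) (φ : P2 d → ℝ) (κ ε R : ℝ) : ℝ :=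
  ε * κ ^ 2 + κ * Real.sqrt (ε ^ 2 * κ ^ 2 + 2 * omegaR mhat φ ε R (Mke mhat φ κ ε R))

/-- `N_κ^ε(R,m) = εκ√(2φ_κ(m)) + ε·M_κ^ε(R)`. -/
def Nke {d : ℕ} (mhat : P2 d) (φ : P2 d → ℝ) (κ ε R : ℝ) (m : P2 d) : ℝ :=
  ε * κ * Real.sqrt (2 * infConv φ κ m) + ε * Mke mhat φ κ ε R

/-- `μ̄` is an Ekeland point for `(φ,κ,ε,m)`. -/
def EkelandPt {d : ℕ} (φ : P2 d → ℝ) (κ ε : ℝ) (m μb : P2 d) : Prop :=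
  (φ μb + 1 / (2 * κ ^ 2) * W2 m μb ^ 2 ≤ φ m - ε * W2 μb m) ∧
  ∀ μ : P2 d, φ μb + 1 / (2 * κ ^ 2) * W2 m μb ^ 2 ≤
    φ μ + 1 / (2 * κ ^ 2) * W2 m μ ^ 2 + ε * W2 μb μ

/-- The proximal subgradient inequality at `m` with target `μ`, slope measure `α`
and parameter `σ`. -/
def ProxIneq {d : ℕ} (φ : P2 d → ℝ) (ε σ : ℝ) (m : P2 d)
    (α : Measure (Ed d × Ed d)) (μ : P2 d) : Prop :=
  ∀ β : Measure (Ed d × Ed d × Ed d), IsP2Meas β →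
    IsCoupling (β.map fun z => (z.1, z.2.1)) m μ →
    β.map (fun z => (z.1, z.2.2)) = α →
    φ m + ∫ z, ⟪z.2.2, z.2.1 - z.1⟫_ℝ ∂β - σ * ∫ z, ‖z.2.1 - z.1‖ ^ 2 ∂β
      - ε * W2 m μ ≤ φ μ

/-- `α ∈ ∂_P^ε φ(m)` : proximal `ε`-subgradient. -/
def ProxSubgrad {d : ℕ} (φ : P2 d → ℝ) (ε : ℝ) (m : P2 d)
    (α : Measure (Ed d × Ed d)) : Prop :=
  IsP2Meas α ∧ ∃ σ > (0 : ℝ), ∃ r > (0 : ℝ), ∀ μ : P2 d, W2 m μ ≤ r → ProxIneq φ ε σ m α μ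

/-- `(φ,ψ)` is a control-Lyapunov pair at `m̂` for the dynamics `f`, with threshold `ε₀`. -/
structure IsCLP {d : ℕ} {U : Type*} (f : Ed d → P2 d → U → Ed d) (mhat : P2 d)
    (φ : P2 d → ℝ) (ψ : P2 d → ℝ → ℝ) (ε₀ : ℝ) : Prop where
  phi_uc : UCmem mhat φ
  psi_pos : ∀ (m : P2 d) (ε : ℝ), 0 < ε → 0 < ψ m ε
  psi_cont : ∀ (m : P2 d) (ε : ℝ), 0 < ε → ∀ η > (0 : ℝ), ∃ δ > (0 : ℝ),
    ∀ (m' : P2 d) (ε' : ℝ), 0 < ε' → W2 m m' < δ → |ε - ε'| < δ → |ψ m ε - ψ m' ε'| < η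
  level_bdd : ∀ c : ℝ, ∃ K : ℝ, ∀ μ : P2 d, φ μ ≤ c → W2 mhat μ ≤ K
  psi_inf_pos : ∀ r R : ℝ, 0 < r → r < R → ∀ ε > (0 : ℝ), ∃ g > (0 : ℝ),
    ∀ m : P2 d, W2 mhat m ≤ R → ¬ W2 mhat m < r → g ≤ ψ m ε
  psi_mono : ∀ (m : P2 d) (ε ε' : ℝ), 0 < ε → ε ≤ ε' → ψ m ε ≤ ψ m ε'
  eps0_pos : 0 < ε₀
  decrease : ∀ ε : ℝ, 0 < ε → ε < ε₀ → ∀ (m : P2 d) (α : Measure (Ed d × Ed d)),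
    ProxSubgrad φ ε m α → ∃ u : U, ∫ z, ⟪z.2, f z.1 m u⟫_ℝ ∂α ≤ -ψ m ε

/-- A partition of `[0,∞)`. -/
def IsPartition (θ : ℕ → ℝ) : Prop :=
  θ 0 = 0 ∧ StrictMono θ ∧ Tendsto θ atTop atTop

/-- The steps of the partition `θ` lie in `[δ₁, δ₂]` (i.e. `θ ∈ Θ(δ₁,δ₂)`). -/
def StepIn (θ : ℕ → ℝ) (δ₁ δ₂ : ℝ) : Prop :=
  ∀ i : ℕ, δ₁ ≤ θ (i + 1) - θ i ∧ θ (i + 1) - θ i ≤ δ₂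

/-- `W₂`-continuity of a measure-valued curve on `[a,b]`. -/
def W2ContinuousOn {d : ℕ} (m : ℝ → P2 d) (a b : ℝ) : Prop :=
  ∀ t ∈ Icc a b, ∀ η > (0 : ℝ), ∃ δ > (0 : ℝ), ∀ s ∈ Icc a b, |s - t| < δ →
    W2 (m s) (m t) < η

/-- `m` is a `W₂`-continuous distributional solution of the non-local continuity equation
`∂_t m_t + div(f(x,m_t,u) m_t) = 0` on `[a,b]` with constant control `u`. -/
def SolvesCE {d : ℕ} {U : Type*} (f : Ed d → P2 d → U → Ed d) (u : U)
    (m : ℝ → P2 d) (a b : ℝ) : Prop :=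
  W2ContinuousOn m a b ∧
  ∀ χ : Ed d × ℝ → ℝ, ContDiff ℝ (⊤ : ℕ∞) χ → HasCompactSupport χ →
    tsupport χ ⊆ univ ×ˢ Ioo a b →
    ∫ t in a..b, ∫ x, (deriv (fun s : ℝ => χ (x, s)) t +
      fderiv ℝ (fun y : Ed d => χ (y, t)) x (f x (m t) u)) ∂(m t).1 = 0

/-- A `θ`-trajectory of the controlled continuity equation under the feedback `k`,
starting from `m_*`. -/
def IsTraj {d : ℕ} {U : Type*} (f : Ed d → P2 d → U → Ed d) (k : P2 d → U)
    (θ : ℕ → ℝ) (mstar : P2 d) (m : ℝ → P2 d) : Prop :=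
  m 0 = mstar ∧ ∀ i : ℕ, SolvesCE f (k (m (θ i))) m (θ i) (θ (i + 1))

/-- The extremal-shift value `∫ ((x−y)/κ²)·f(x,m,u) dπ(x,y)`. -/
def shiftVal {d : ℕ} {U : Type*} (f : Ed d → P2 d → U → Ed d) (κ : ℝ)
    (π : Measure (Ed d × Ed d)) (m : P2 d) (u : U) : ℝ :=
  ∫ p, ⟪(κ ^ 2)⁻¹ • (p.1 - p.2), f p.1 m u⟫_ℝ ∂π

/-- `k` is an extremal-shift feedback associated with the plan selection `πsel`. -/
def IsExtremalShift {d : ℕ} {U : Type*} (f : Ed d → P2 d → U → Ed d) (κ : ℝ)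
    (πsel : P2 d → Measure (Ed d × Ed d)) (k : P2 d → U) : Prop :=
  ∀ (m : P2 d) (u : U), shiftVal f κ (πsel m) m (k m) ≤ shiftVal f κ (πsel m) m u

/-- `C₂(R)` (computed with time-step bound `δ` and `s = ς₂(m̂)`). -/
def C2const (C₁ δ s R : ℝ) : ℝ :=
  C₁ * Real.exp (C₁ * δ) * (1 + 2 * (C₁ * δ + s + R) * Real.exp (2 * C₁ * δ))

/-- `C₃(R)` (computed with time-step bound `δ` and `s = ς₂(m̂)`). -/
def C3const (C₀ C₁ δ s R : ℝ) : ℝ :=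
  C₀ * (C₁ * Real.exp (C₁ * δ) * (1 + 2 * (C₁ * δ + s + R) * Real.exp (2 * C₁ * δ))
    + C2const C₁ δ s R)

/-- A feedback `k` is s-stabilizing at `m̂`. -/
def SStabilizing {d : ℕ} {U : Type*} (f : Ed d → P2 d → U → Ed d) (mhat : P2 d)
    (k : P2 d → U) : Prop :=
  ∃ M : ℝ → ℝ, (∀ R > (0 : ℝ), 0 < M R) ∧
    Tendsto M (nhdsWithin 0 (Ioi 0)) (nhds 0) ∧
    ∀ r R : ℝ, 0 < r → r < R → ∃ δ > (0 : ℝ), ∃ T > (0 : ℝ),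
      ∀ δhat : ℝ, 0 < δhat → δhat < δ →
      ∀ θ : ℕ → ℝ, IsPartition θ → StepIn θ δhat δ →
      ∀ mstar : P2 d, W2 mhat mstar ≤ R →
      ∀ m : ℝ → P2 d, IsTraj f k θ mstar m →
        (∀ t : ℝ, T ≤ t → W2 mhat (m t) ≤ r) ∧ (∀ t : ℝ, 0 ≤ t → W2 mhat (m t) ≤ M R)


theorem aux_sqrt_lint {α F : Type*} [MeasurableSpace α] [NormedAddCommGroup F] (μ : Measure α)
    (g : α → F) :
    Real.sqrt (∫⁻ x, (‖g x‖₊ : ℝ≥0∞) ^ 2 ∂μ).toReal = (eLpNorm g 2 μ).toReal := by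
  rw [eLpNorm_eq_lintegral_rpow_enorm_toReal (by norm_num) (by norm_num), ← ENNReal.toReal_rpow,
    Real.sqrt_eq_rpow]
  simp [enorm_eq_nnnorm]

theorem aux_lint_eq {α F : Type*} [MeasurableSpace α] [NormedAddCommGroup F] (μ : Measure α)
    (g : α → F) :
    ∫⁻ x, (‖g x‖₊ : ℝ≥0∞) ^ 2 ∂μ = (eLpNorm g 2 μ) ^ 2 := by
  rw [eLpNorm_eq_lintegral_rpow_enorm_toReal (by norm_num) (by norm_num), ← ENNReal.rpow_natCast,
    ← ENNReal.rpow_mul]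
  simp [enorm_eq_nnnorm]

theorem aux_varsigma {d : ℕ} (μ : P2 d) : varsigma2 μ = (eLpNorm (fun x => x) 2 μ.1).toReal :=
  aux_sqrt_lint _ _

theorem aux_memLp {d : ℕ} (μ : P2 d) : MemLp (fun x : Ed d => x) 2 μ.1 := by
  refine ⟨by fun_prop, ?_⟩
  have h := μ.2.2
  rw [aux_lint_eq μ.1 (fun x => x)] at h
  by_contra hc
  have : eLpNorm (fun x : Ed d => x) 2 μ.1 = ⊤ := by simpa using hc
  rw [this] at h
  simp at h

theorem aux_prob {d : ℕ} (μ : P2 d) : IsProbabilityMeasure μ.1 := μ.2.1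

theorem aux_varsigma_nonneg {d : ℕ} (μ : P2 d) : 0 ≤ varsigma2 μ := Real.sqrt_nonneg _

theorem aux_W2_nonneg {d : ℕ} (μ ν : P2 d) : 0 ≤ W2 μ ν := Real.sqrt_nonneg _

theorem aux_coupling_memLp {d : ℕ} {μ ν : P2 d} {π : Measure (Ed d × Ed d)}
    (h : IsCoupling π μ ν) : MemLp (fun p : Ed d × Ed d => p.1) 2 π ∧
      MemLp (fun p : Ed d × Ed d => p.2) 2 π := by
  constructor
  · have := aux_memLp μ
    rw [← h.1] at this
    exact this.comp_of_map (by fun_prop)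
  · have := aux_memLp ν
    rw [← h.2] at this
    exact this.comp_of_map (by fun_prop)

theorem aux_coupling_prob {d : ℕ} {μ ν : P2 d} {π : Measure (Ed d × Ed d)}
    (h : IsCoupling π μ ν) : IsProbabilityMeasure π := by
  constructor
  have := (aux_prob μ).measure_univ
  rw [← h.1, Measure.map_apply (by fun_prop) MeasurableSet.univ] at this
  simpa using this

theorem aux_coupling_prod {d : ℕ} (μ ν : P2 d) : IsCoupling (μ.1.prod ν.1) μ ν := by
  have := aux_prob μ
  have := aux_prob ν
  constructor <;> simp

theorem aux_Wcost {d : ℕ} (π : Measure (Ed d × Ed d)) :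
    Wcost π = (eLpNorm (fun p : Ed d × Ed d => p.1 - p.2) 2 π) ^ 2 := aux_lint_eq _ _

theorem aux_W2_le {d : ℕ} {μ ν : P2 d} {π : Measure (Ed d × Ed d)}
    (h : IsCoupling π μ ν) :
    W2 μ ν ≤ (eLpNorm (fun p : Ed d × Ed d => p.1 - p.2) 2 π).toReal := by
  have hm : MemLp (fun p : Ed d × Ed d => p.1 - p.2) 2 π :=
    (aux_coupling_memLp h).1.sub (aux_coupling_memLp h).2
  unfold W2
  rw [← aux_sqrt_lint]
  apply Real.sqrt_le_sqrt
  apply ENNReal.toReal_mono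
  · rw [aux_lint_eq]
    exact ENNReal.pow_ne_top hm.2.ne
  · exact iInf₂_le π h

theorem aux_exists_coupling {d : ℕ} (μ ν : P2 d) {c : ℝ} (hc : W2 μ ν < c) :
    ∃ π, IsCoupling π μ ν ∧
      (eLpNorm (fun p : Ed d × Ed d => p.1 - p.2) 2 π).toReal < c := by
  have hc0 : 0 < c := (aux_W2_nonneg μ ν).trans_lt hc
  have hfin : (⨅ π ∈ {π : Measure (Ed d × Ed d) | IsCoupling π μ ν}, Wcost π) ≠ ⊤ := by
    have h := aux_coupling_prod μ ν
    have hm : MemLp (fun p : Ed d × Ed d => p.1 - p.2) 2 (μ.1.prod ν.1) :=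
      (aux_coupling_memLp h).1.sub (aux_coupling_memLp h).2
    have h1 : (⨅ π ∈ {π : Measure (Ed d × Ed d) | IsCoupling π μ ν}, Wcost π)
      ≤ Wcost (μ.1.prod ν.1) :=
        iInf₂_le (f := fun (π : Measure (Ed d × Ed d)) (_ : IsCoupling π μ ν) => Wcost π)
          (μ.1.prod ν.1) h
    refine ne_top_of_le_ne_top ?_ h1
    rw [aux_Wcost]
    exact ENNReal.pow_ne_top hm.2.ne
  have h2 : (⨅ π ∈ {π : Measure (Ed d × Ed d) | IsCoupling π μ ν}, Wcost π)
      < ENNReal.ofReal (c ^ 2) := by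
    unfold W2 at hc
    rw [Real.sqrt_lt' hc0] at hc
    rw [← ENNReal.ofReal_toReal hfin]
    exact (ENNReal.ofReal_lt_ofReal_iff (by positivity)).2 hc
  obtain ⟨π, hπ, hlt⟩ : ∃ π, ∃ _ : IsCoupling π μ ν, Wcost π < ENNReal.ofReal (c ^ 2) := by
    simpa [iInf_lt_iff] using h2
  refine ⟨π, hπ, ?_⟩
  rw [← aux_sqrt_lint, Real.sqrt_lt' hc0]
  have : Wcost π ≠ ⊤ := hlt.ne_top
  rw [← ENNReal.ofReal_toReal this, ENNReal.ofReal_lt_ofReal_iff (by positivity)] at hlt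
  exact hlt

theorem aux_varsigma_sub {d : ℕ} (μ ν : P2 d) : |varsigma2 μ - varsigma2 ν| ≤ W2 μ ν := by
  refine le_of_forall_gt_imp_ge_of_dense fun c hc => ?_
  obtain ⟨π, hπ, hlt⟩ := aux_exists_coupling μ ν hc
  obtain ⟨m1, m2⟩ := aux_coupling_memLp hπ
  have e1 : varsigma2 μ = (eLpNorm (fun p : Ed d × Ed d => p.1) 2 π).toReal := by
    rw [aux_varsigma, ← hπ.1, eLpNorm_map_measure (by fun_prop) (by fun_prop)]
    rfl
  have e2 : varsigma2 ν = (eLpNorm (fun p : Ed d × Ed d => p.2) 2 π).toReal := by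
    rw [aux_varsigma, ← hπ.2, eLpNorm_map_measure (by fun_prop) (by fun_prop)]
    rfl
  have m3 := m1.sub m2
  have h1 : eLpNorm (fun p : Ed d × Ed d => p.1) 2 π ≤
      eLpNorm (fun p : Ed d × Ed d => p.1 - p.2) 2 π + eLpNorm (fun p : Ed d × Ed d => p.2) 2 π := by
    have := eLpNorm_add_le m3.1 m2.1 (p := 2) (by norm_num)
    refine le_trans (le_of_eq ?_) this
    congr 1
    ext p
    simp
  have h2 : eLpNorm (fun p : Ed d × Ed d => p.2) 2 π ≤
      eLpNorm (fun p : Ed d × Ed d => p.1) 2 π + eLpNorm (fun p : Ed d × Ed d => p.1 - p.2) 2 π := by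
    have := eLpNorm_sub_le m1.1 m3.1 (p := 2) (by norm_num)
    refine le_trans (le_of_eq ?_) this
    congr 1
    ext p
    simp
  have k1 := ENNReal.toReal_mono (ENNReal.add_ne_top.2 ⟨m3.2.ne, m2.2.ne⟩) h1
  have k2 := ENNReal.toReal_mono (ENNReal.add_ne_top.2 ⟨m1.2.ne, m3.2.ne⟩) h2
  rw [ENNReal.toReal_add m3.2.ne m2.2.ne] at k1
  rw [ENNReal.toReal_add m1.2.ne m3.2.ne] at k2
  have e3 : (eLpNorm ((fun p : Ed d × Ed d => p.1) - (fun p : Ed d × Ed d => p.2)) 2 π).toReal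
    = (eLpNorm (fun p : Ed d × Ed d => p.1 - p.2) 2 π).toReal := rfl
  rw [e1, e2, abs_le]
  constructor <;> linarith

theorem aux_lip_integrable {d : ℕ} (μ : P2 d) {g : Ed d → ℝ} {L : ℝ}
    (hg : ∀ x y, |g x - g y| ≤ L * ‖x - y‖) : Integrable g μ.1 := by
  have := aux_prob μ
  have hL : Continuous g := by
    refine (LipschitzWith.of_dist_le_mul (K := Real.toNNReal L) fun x y => ?_).continuous
    rw [Real.dist_eq, dist_eq_norm]
    refine (hg x y).trans ?_
    gcongr
    exact Real.le_coe_toNNReal L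
  have h1 : Integrable (fun x : Ed d => ‖x‖) μ.1 :=
    ((aux_memLp μ).integrable (by norm_num)).norm
  refine Integrable.mono' ((integrable_const |g 0|).add (h1.const_mul L)) hL.aestronglyMeasurable
    (Eventually.of_forall fun x => ?_)
  have := hg x 0
  simp only [sub_zero] at this
  have h3 : |g x| ≤ |g x - g 0| + |g 0| := by
    have := abs_add_le (g x - g 0) (g 0); simpa using this
  simp only [Real.norm_eq_abs, Pi.add_apply]
  linarith

theorem aux_lip_continuous {E : Type*} [NormedAddCommGroup E] {g : E → ℝ} {L : ℝ}
    (hg : ∀ x y, |g x - g y| ≤ L * ‖x - y‖) : Continuous g := by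
  refine (LipschitzWith.of_dist_le_mul (K := Real.toNNReal L) fun x y => ?_).continuous
  rw [Real.dist_eq, dist_eq_norm]
  refine (hg x y).trans ?_
  gcongr
  exact Real.le_coe_toNNReal L

theorem aux_lip_W2 {d : ℕ} (μ ν : P2 d) {g : Ed d → ℝ} {L : ℝ} (hL : 0 ≤ L)
    (hg : ∀ x y, |g x - g y| ≤ L * ‖x - y‖) :
    |∫ x, g x ∂μ.1 - ∫ x, g x ∂ν.1| ≤ L * W2 μ ν := by
  have key : ∀ c, W2 μ ν < c → |∫ x, g x ∂μ.1 - ∫ x, g x ∂ν.1| ≤ L * c := by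
    intro c hc
    obtain ⟨π, hπ, hlt⟩ := aux_exists_coupling μ ν hc
    have := aux_coupling_prob hπ
    obtain ⟨m1, m2⟩ := aux_coupling_memLp hπ
    have m3 : MemLp (fun p : Ed d × Ed d => p.1 - p.2) 2 π := m1.sub m2
    have hgc := aux_lip_continuous hg
    have i1 : Integrable (fun p : Ed d × Ed d => g p.1) π := by
      have := aux_lip_integrable μ hg
      rw [← hπ.1] at this
      exact this.comp_measurable (by fun_prop)
    have i2 : Integrable (fun p : Ed d × Ed d => g p.2) π := by
      have := aux_lip_integrable ν hg
      rw [← hπ.2] at this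
      exact this.comp_measurable (by fun_prop)
    have e1 : ∫ x, g x ∂μ.1 = ∫ p, g p.1 ∂π := by
      rw [← hπ.1, integral_map (by fun_prop) (by fun_prop)]
    have e2 : ∫ x, g x ∂ν.1 = ∫ p, g p.2 ∂π := by
      rw [← hπ.2, integral_map (by fun_prop) (by fun_prop)]
    rw [e1, e2, ← integral_sub i1 i2]
    have i3 : Integrable (fun p : Ed d × Ed d => ‖p.1 - p.2‖) π :=
      (m3.integrable (by norm_num)).norm
    have h4 : ∫ p, ‖p.1 - p.2‖ ∂π ≤ (eLpNorm (fun p : Ed d × Ed d => p.1 - p.2) 2 π).toReal := by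
      rw [integral_norm_eq_lintegral_enorm m3.1, ← eLpNorm_one_eq_lintegral_enorm]
      exact ENNReal.toReal_mono m3.2.ne (eLpNorm_le_eLpNorm_of_exponent_le (by norm_num) m3.1)
    calc |∫ p, g p.1 - g p.2 ∂π| ≤ ∫ p, |g p.1 - g p.2| ∂π := abs_integral_le_integral_abs
      _ ≤ ∫ p, L * ‖p.1 - p.2‖ ∂π := by
          refine integral_mono (i1.sub i2).abs (i3.const_mul L) fun p => hg _ _
      _ = L * ∫ p, ‖p.1 - p.2‖ ∂π := integral_const_mul _ _
      _ ≤ L * c := by gcongr; linarith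
  have : ContinuousWithinAt (fun c => L * c) (Ioi (W2 μ ν)) (W2 μ ν) := by fun_prop
  refine ge_of_tendsto this ?_
  filter_upwards [self_mem_nhdsWithin] with c hc using key c hc


theorem aux_bump_primitive {a b p q r : ℝ} (hr : 0 < r) (hap : a < p - r) (hpq : p ≤ q)
    (hqb : q + r < b) (φ : ContDiffBump (0 : ℝ)) (hφ : φ.rOut = r) :
    ∃ η : ℝ → ℝ, ContDiff ℝ (⊤ : ℕ∞) η ∧ HasCompactSupport η ∧ tsupport η ⊆ Ioo a b ∧
      ∀ t, HasDerivAt η (φ.normed volume (t - p) - φ.normed volume (t - q)) t := by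
  set w : ℝ → ℝ := φ.normed volume with hw
  have hwc : Continuous w := φ.continuous_normed
  have hws : Function.support w = Metric.ball 0 r := by rw [hw, φ.support_normed_eq, hφ]
  have hwz : ∀ x, r ≤ |x| → w x = 0 := by
    intro x hx
    by_contra h
    have : x ∈ Function.support w := h
    rw [hws] at this
    simp at this
    linarith
  set η : ℝ → ℝ := fun t => ∫ x in a..t, (w (x - p) - w (x - q)) with hη
  have hd : ∀ t, HasDerivAt η (w (t - p) - w (t - q)) t := by
    intro t
    have hc : Continuous fun x => w (x - p) - w (x - q) := by fun_prop
    exact intervalIntegral.integral_hasDerivAt_right (hc.intervalIntegrable _ _)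
      (hc.stronglyMeasurableAtFilter _ _) hc.continuousAt
  have hbump : ∀ c t, a < c - r → c + r ≤ t → ∫ x in a..t, w (x - c) = 1 := by
    intro c t h1 h2
    rw [intervalIntegral.integral_eq_integral_of_support_subset]
    · rw [integral_sub_right_eq_self (fun x => w x) c]
      exact φ.integral_normed
    · intro x hx
      by_contra hxx
      apply hx
      apply hwz
      simp only [mem_Ioc, not_and_or, not_lt, not_le] at hxx
      rcases hxx with h | h
      · rw [abs_of_nonpos (by linarith)]; linarith
      · rw [abs_of_nonneg (by linarith)]; linarith
  have hz1 : ∀ t, t ≤ p - r → η t = 0 := by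
    intro t ht
    simp only [hη]
    rw [intervalIntegral.integral_congr (g := fun _ => (0 : ℝ))]
    · simp
    · intro x hx
      have hx2 : x ≤ p - r := by
        rw [mem_uIcc] at hx
        rcases hx with h | h <;> linarith [h.1, h.2]
      simp only
      rw [hwz, hwz, sub_zero]
      · rw [abs_of_nonpos (by linarith)]; linarith
      · rw [abs_of_nonpos (by linarith)]; linarith
  have hz2 : ∀ t, q + r ≤ t → η t = 0 := by
    intro t ht
    simp only [hη]
    have c1 : Continuous fun x => w (x - p) := by fun_prop
    have c2 : Continuous fun x => w (x - q) := by fun_prop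
    rw [intervalIntegral.integral_sub (c1.intervalIntegrable _ _) (c2.intervalIntegrable _ _),
      hbump p t (by linarith) (by linarith), hbump q t (by linarith) (by linarith), sub_self]
  have hsub : tsupport η ⊆ Icc (p - r) (q + r) := by
    apply closure_minimal _ isClosed_Icc
    intro x hx
    by_contra hxx
    apply hx
    simp only [mem_Icc, not_and_or, not_le] at hxx
    rcases hxx with h | h
    · exact hz1 x h.le
    · exact hz2 x h.le
  refine ⟨η, ?_, ?_, ?_, hd⟩
  · rw [contDiff_infty_iff_deriv]
    refine ⟨fun t => (hd t).differentiableAt, ?_⟩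
    have : deriv η = fun t => w (t - p) - w (t - q) := funext fun t => (hd t).deriv
    rw [this]
    have hws : ContDiff ℝ (⊤ : ℕ∞) w := φ.contDiff_normed
    exact (hws.comp (contDiff_id.sub contDiff_const)).sub (hws.comp (contDiff_id.sub contDiff_const))
  · exact HasCompactSupport.of_support_subset_isCompact isCompact_Icc
      ((subset_tsupport η).trans hsub)
  · intro x hx
    have := hsub hx
    exact ⟨by linarith [this.1], by linarith [this.2]⟩

theorem aux_bump_conv (φ : ContDiffBump (0 : ℝ)) {D : ℝ → ℝ} (hD : Continuous D) (p ε : ℝ)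
    (h : ∀ x ∈ Metric.ball p φ.rOut, dist (D x) (D p) ≤ ε) :
    |(∫ x, φ.normed volume (x - p) * D x) - D p| ≤ ε := by
  have h1 := φ.dist_normed_convolution_le (μ := volume) (g := D) (x₀ := p) (ε := ε)
    hD.aestronglyMeasurable h
  rw [Real.dist_eq] at h1
  convert h1 using 3
  rw [convolution_def, ← integral_sub_left_eq_self _ volume p]
  congr 1
  ext t
  simp only [ContinuousLinearMap.lsmul_apply, smul_eq_mul]
  rw [← φ.normed_neg]
  congr 2 <;> ring_nf

theorem aux_duBoisReymond {a b : ℝ} (hab : a < b) {G H : ℝ → ℝ} (hG : Continuous G)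
    (hH : Continuous H)
    (h : ∀ η : ℝ → ℝ, ContDiff ℝ (⊤ : ℕ∞) η → HasCompactSupport η → tsupport η ⊆ Ioo a b →
      ∫ t in a..b, (deriv η t * G t + η t * H t) = 0) :
    ∀ t₁ ∈ Icc a b, ∀ t₂ ∈ Icc a b, G t₂ - G t₁ = ∫ t in t₁..t₂, H t := by
  set P : ℝ → ℝ := fun t => ∫ x in a..t, H x with hP
  have hPd : ∀ t, HasDerivAt P (H t) t := fun t =>
    intervalIntegral.integral_hasDerivAt_right (hH.intervalIntegrable _ _)
      (hH.stronglyMeasurableAtFilter _ _) hH.continuousAt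
  have hPc : Continuous P := continuous_iff_continuousAt.2 fun t => (hPd t).continuousAt
  set D : ℝ → ℝ := fun t => G t - P t with hDdef
  have hDc : Continuous D := hG.sub hPc
  have key : ∀ η : ℝ → ℝ, ContDiff ℝ (⊤ : ℕ∞) η → HasCompactSupport η → tsupport η ⊆ Ioo a b →
      ∫ t in a..b, deriv η t * D t = 0 := by
    intro η h1 h2 h3
    have h0 := h η h1 h2 h3
    have hηa : η a = 0 := by
      by_contra hc
      have := h3 (subset_tsupport η hc)
      exact lt_irrefl _ this.1
    have hηb : η b = 0 := by
      by_contra hc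
      have := h3 (subset_tsupport η hc)
      exact lt_irrefl _ this.2
    have hdc : Continuous (deriv η) := h1.continuous_deriv (by simp)
    have hηd : ∀ t, HasDerivAt η (deriv η t) t := fun t =>
      ((h1.differentiable (by simp)) t).hasDerivAt
    have hp := intervalIntegral.integral_mul_deriv_eq_deriv_mul (a := a) (b := b)
      (fun x _ => hηd x) (fun x _ => hPd x) (hdc.intervalIntegrable _ _) (hH.intervalIntegrable _ _)
    rw [hηa, hηb] at hp
    have hηc := h1.continuous
    have c1 : Continuous fun t => deriv η t * G t := by fun_prop
    have c2 : Continuous fun t => η t * H t := by fun_prop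
    have c3 : Continuous fun t => deriv η t * P t := by fun_prop
    rw [intervalIntegral.integral_add (c1.intervalIntegrable _ _)
      (c2.intervalIntegrable _ _), hp] at h0
    have : ∀ t, deriv η t * D t = deriv η t * G t - deriv η t * P t := fun t => by
      simp only [hDdef]; ring
    simp_rw [this]
    rw [intervalIntegral.integral_sub (c1.intervalIntegrable _ _)
      (c3.intervalIntegrable _ _)]
    linarith
  have hD1 : ∀ p q, a < p → p ≤ q → q < b → D p = D q := by
    intro p q hp hpq hq
    have : ∀ ε > 0, |D p - D q| ≤ ε := by
      intro ε hε
      obtain ⟨r1, hr1, hr1'⟩ := Metric.continuous_iff.1 hDc p (ε / 2) (by positivity)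
      obtain ⟨r2, hr2, hr2'⟩ := Metric.continuous_iff.1 hDc q (ε / 2) (by positivity)
      obtain ⟨r, hr, hrm⟩ : ∃ r > 0, r < min (min r1 r2) (min (p - a) (b - q)) := by
        apply exists_between
        simp only [lt_min_iff]
        refine ⟨⟨hr1, hr2⟩, by linarith, by linarith⟩
      simp only [lt_min_iff] at hrm
      let φ : ContDiffBump (0 : ℝ) := ⟨r / 2, r, by positivity, by linarith⟩
      have hφ : φ.rOut = r := rfl
      have hap : a < p - r := by linarith [hrm.2.1]
      have hqb : q + r < b := by linarith [hrm.2.2]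
      obtain ⟨η, e1, e2, e3, e4⟩ := aux_bump_primitive hr hap hpq hqb φ hφ
      have k := key η e1 e2 e3
      have hdeq : deriv η = fun t => φ.normed volume (t - p) - φ.normed volume (t - q) :=
        funext fun t => (e4 t).deriv
      have hwc : Continuous (φ.normed (volume : Measure ℝ)) := φ.continuous_normed
      have hbump : ∀ c, a < c - r → c + r < b → ∫ t in a..b, φ.normed volume (t - c) * D t =
          ∫ t, φ.normed volume (t - c) * D t := by
        intro c h1 h2
        apply intervalIntegral.integral_eq_integral_of_support_subset
        intro x hx
        have hx1 : x - c ∈ Function.support (φ.normed (volume : Measure ℝ)) := by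
          intro hc; apply hx; simp [hc]
        rw [φ.support_normed_eq, hφ] at hx1
        simp only [Metric.mem_ball, dist_zero_right, Real.norm_eq_abs, abs_lt] at hx1
        exact ⟨by linarith, by linarith⟩
      have c1 : Continuous fun t => φ.normed volume (t - p) * D t := by fun_prop
      have c2 : Continuous fun t => φ.normed volume (t - q) * D t := by fun_prop
      rw [hdeq] at k
      simp_rw [sub_mul] at k
      rw [intervalIntegral.integral_sub (c1.intervalIntegrable _ _) (c2.intervalIntegrable _ _),
        hbump p (by linarith) (by linarith), hbump q (by linarith) (by linarith)] at k
      have f1 := aux_bump_conv φ hDc p (ε / 2) (fun x hx => (hr1' x (by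
        rw [Metric.mem_ball, hφ] at hx; linarith [hrm.1.1])).le)
      have f2 := aux_bump_conv φ hDc q (ε / 2) (fun x hx => (hr2' x (by
        rw [Metric.mem_ball, hφ] at hx; linarith [hrm.1.2])).le)
      rw [abs_le] at f1 f2 ⊢
      constructor <;> linarith [f1.1, f1.2, f2.1, f2.2]
    have h0 : |D p - D q| ≤ 0 := le_of_forall_pos_le_add fun ε hε => by simpa using this ε hε
    exact sub_eq_zero.1 (abs_eq_zero.1 (le_antisymm h0 (abs_nonneg _)))
  set c := (a + b) / 2
  have hDcst : ∀ t ∈ Icc a b, D t = D c := by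
    have hcl : IsClosed {t | D t = D c} := isClosed_eq hDc continuous_const
    have hsub : Ioo a b ⊆ {t | D t = D c} := by
      intro t ht
      have hc : c ∈ Ioo a b := ⟨by simp only [c]; linarith, by simp only [c]; linarith⟩
      rcases le_total t c with h | h
      · exact hD1 t c ht.1 h hc.2
      · exact (hD1 c t hc.1 h ht.2).symm
    have := hcl.closure_subset_iff.2 hsub
    rw [closure_Ioo hab.ne] at this
    exact this
  intro t₁ h₁ t₂ h₂
  have e1 := hDcst t₁ h₁
  have e2 := hDcst t₂ h₂
  have e3 : ∫ t in t₁..t₂, H t = P t₂ - P t₁ := by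
    simp only [hP]
    rw [intervalIntegral.integral_interval_sub_left (hH.intervalIntegrable _ _)
      (hH.intervalIntegrable _ _)]
  rw [e3]
  simp only [hDdef] at e1 e2
  linarith


theorem aux_W2_self {d : ℕ} (μ : P2 d) : W2 μ μ = 0 := by
  refine le_antisymm ?_ (aux_W2_nonneg _ _)
  have hc : IsCoupling (μ.1.map fun x => (x, x)) μ μ := by
    constructor
    · rw [Measure.map_map (by fun_prop) (by fun_prop)]
      exact Measure.map_id
    · rw [Measure.map_map (by fun_prop) (by fun_prop)]
      exact Measure.map_id
  refine (aux_W2_le hc).trans (le_of_eq ?_)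
  rw [eLpNorm_map_measure (by fun_prop) (by fun_prop)]
  have : ((fun p : Ed d × Ed d => p.1 - p.2) ∘ fun x => (x, x)) = fun _ => 0 := by
    ext x; simp
  rw [this]
  simp

theorem aux_contOn {d : ℕ} {F : Type*} [NormedAddCommGroup F] {m : ℝ → P2 d} {s T : ℝ}
    (hm : W2ContinuousOn m s T)
    {G : ℝ → F} {c : ℝ} (h : ∀ q ∈ Icc s T, ∀ q' ∈ Icc s T, ‖G q - G q'‖ ≤ c * W2 (m q) (m q')) :
    ContinuousOn G (Icc s T) := by
  rw [Metric.continuousOn_iff]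
  intro t ht ε hε
  obtain ⟨δ, hδ, hd⟩ := hm t ht (ε / (|c| + 1)) (by positivity)
  refine ⟨δ, hδ, fun q hq hqt => ?_⟩
  have h1 := hd q hq (by rwa [Real.dist_eq] at hqt)
  rw [dist_eq_norm]
  have hW := aux_W2_nonneg (m q) (m t)
  calc ‖G q - G t‖ ≤ c * W2 (m q) (m t) := h q hq t ht
    _ ≤ (|c| + 1) * W2 (m q) (m t) := by
        gcongr
        linarith [le_abs_self c]
    _ < (|c| + 1) * (ε / (|c| + 1)) := by gcongr
    _ = ε := by field_simp

structure FieldHyp {d : ℕ} (m : ℝ → P2 d) (v : ℝ → Ed d → Ed d) (s T C₀ A : ℝ) : Prop where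
  hst : s < T
  hC : 0 ≤ C₀
  hA : 0 < A
  lip : ∀ t t' x y, ‖v t x - v t' y‖ ≤ C₀ * (‖x - y‖ + W2 (m t) (m t'))
  growth : ∀ t ∈ Icc s T, ∀ x, ‖v t x‖ ≤ A * (1 + ‖x‖)
  cont : W2ContinuousOn m s T
  ce : ∀ χ : Ed d × ℝ → ℝ, ContDiff ℝ (⊤ : ℕ∞) χ → HasCompactSupport χ →
    tsupport χ ⊆ univ ×ˢ Ioo s T →
    ∫ t in s..T, ∫ x, (deriv (fun s : ℝ => χ (x, s)) t +
      fderiv ℝ (fun y : Ed d => χ (y, t)) x (v t x)) ∂(m t).1 = 0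

structure Tst {d : ℕ} (φ : Ed d → ℝ) (L K ρ : ℝ) : Prop where
  hL : 0 ≤ L
  hK : 0 ≤ K
  hρ : 0 ≤ ρ
  smooth : ContDiff ℝ (⊤ : ℕ∞) φ
  supp : ∀ x, ρ < ‖x‖ → φ x = 0
  dL : ∀ x, ‖fderiv ℝ φ x‖ ≤ L
  dK : ∀ x y, ‖fderiv ℝ φ x - fderiv ℝ φ y‖ ≤ K * ‖x - y‖

theorem Tst.lip {d : ℕ} {φ : Ed d → ℝ} {L K ρ : ℝ} (h : Tst φ L K ρ) (x y : Ed d) :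
    |φ x - φ y| ≤ L * ‖x - y‖ := by
  have := convex_univ.norm_image_sub_le_of_norm_fderiv_le (𝕜 := ℝ) (f := φ) (C := L)
    (fun x _ => h.smooth.differentiable (by simp) x) (fun x _ => h.dL x) (mem_univ y) (mem_univ x)
  simpa using this

theorem Tst.compact {d : ℕ} {φ : Ed d → ℝ} {L K ρ : ℝ} (h : Tst φ L K ρ) :
    HasCompactSupport φ := by
  refine HasCompactSupport.intro (isCompact_closedBall (0 : Ed d) ρ) fun x hx => h.supp x ?_
  simpa using hx

theorem Tst.fderiv_zero {d : ℕ} {φ : Ed d → ℝ} {L K ρ : ℝ} (h : Tst φ L K ρ) {x : Ed d}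
    (hx : ρ < ‖x‖) : fderiv ℝ φ x = 0 := by
  have : φ =ᶠ[𝓝 x] fun _ => (0 : ℝ) := by
    have ho : IsOpen {y : Ed d | ρ < ‖y‖} := isOpen_lt continuous_const continuous_norm
    filter_upwards [ho.mem_nhds hx] with y hy using h.supp y hy
  rw [this.fderiv_eq]
  simp

theorem FieldHyp.lipx {d : ℕ} {m : ℝ → P2 d} {v : ℝ → Ed d → Ed d} {s T C₀ A : ℝ}
    (F : FieldHyp m v s T C₀ A) (t : ℝ) (x y : Ed d) : ‖v t x - v t y‖ ≤ C₀ * ‖x - y‖ := by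
  have := F.lip t t x y
  rwa [aux_W2_self, add_zero] at this

theorem FieldHyp.continuous {d : ℕ} {m : ℝ → P2 d} {v : ℝ → Ed d → Ed d} {s T C₀ A : ℝ}
    (F : FieldHyp m v s T C₀ A) (t : ℝ) : Continuous (v t) := by
  refine (LipschitzWith.of_dist_le_mul (K := ⟨C₀, F.hC⟩) fun x y => ?_).continuous
  rw [dist_eq_norm, dist_eq_norm]
  exact F.lipx t x y

theorem FieldHyp.H_lip {d : ℕ} {m : ℝ → P2 d} {v : ℝ → Ed d → Ed d} {s T C₀ A : ℝ}
    (F : FieldHyp m v s T C₀ A) {φ : Ed d → ℝ} {L K ρ : ℝ} (h : Tst φ L K ρ) {q : ℝ}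
    (hq : q ∈ Icc s T) (x y : Ed d) :
    |fderiv ℝ φ x (v q x) - fderiv ℝ φ y (v q y)| ≤ (K * (A * (1 + ρ)) + L * C₀) * ‖x - y‖ := by
  have main : ∀ x y : Ed d, ‖x‖ ≤ ρ → |fderiv ℝ φ x (v q x) - fderiv ℝ φ y (v q y)|
      ≤ (K * (A * (1 + ρ)) + L * C₀) * ‖x - y‖ := by
    intro x y hx
    have e : fderiv ℝ φ x (v q x) - fderiv ℝ φ y (v q y) =
      (fderiv ℝ φ x - fderiv ℝ φ y) (v q x) + fderiv ℝ φ y (v q x - v q y) := by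
      simp
    rw [e, ← Real.norm_eq_abs]
    have hA := F.hA
    have h1 : ‖(fderiv ℝ φ x - fderiv ℝ φ y) (v q x)‖ ≤ (K * ‖x - y‖) * (A * (1 + ρ)) := by
      refine (ContinuousLinearMap.le_opNorm _ _).trans ?_
      have hK := h.hK
      gcongr
      · exact h.dK x y
      · refine (F.growth q hq x).trans ?_
        gcongr
    have h2 : ‖fderiv ℝ φ y (v q x - v q y)‖ ≤ L * (C₀ * ‖x - y‖) := by
      refine (ContinuousLinearMap.le_opNorm _ _).trans ?_
      have hL := h.hL
      gcongr
      · exact h.dL y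
      · exact F.lipx q x y
    refine (norm_add_le _ _).trans ?_
    linarith
  by_cases hx : ‖x‖ ≤ ρ
  · exact main x y hx
  · by_cases hy : ‖y‖ ≤ ρ
    · rw [abs_sub_comm, norm_sub_rev]
      exact main y x hy
    · rw [h.fderiv_zero (not_le.1 hx), h.fderiv_zero (not_le.1 hy)]
      simp only [zero_apply, sub_self, abs_zero]
      have := F.hA; have := F.hC; have := h.hK; have := h.hL; have := h.hρ
      positivity

structure Clo {d : ℕ} (m : ℝ → P2 d) (v : ℝ → Ed d → Ed d) (C₀ ω q q' : ℝ) : Prop where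
  int : ∀ (g : Ed d → ℝ) (L : ℝ), 0 ≤ L → (∀ x y, |g x - g y| ≤ L * ‖x - y‖) →
    |∫ x, g x ∂(m q).1 - ∫ x, g x ∂(m q').1| ≤ L * ω
  vel : ∀ x, ‖v q x - v q' x‖ ≤ C₀ * ω

theorem FieldHyp.clo {d : ℕ} {m : ℝ → P2 d} {v : ℝ → Ed d → Ed d} {s T C₀ A : ℝ}
    (F : FieldHyp m v s T C₀ A) (q q' : ℝ) : Clo m v C₀ (W2 (m q) (m q')) q q' where
  int g L hL hg := aux_lip_W2 _ _ hL hg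
  vel x := by
    have := F.lip q q' x x
    rwa [sub_self, norm_zero, zero_add] at this

theorem FieldHyp.unif {d : ℕ} {m : ℝ → P2 d} {v : ℝ → Ed d → Ed d} {s T C₀ A : ℝ}
    (F : FieldHyp m v s T C₀ A) {ω : ℝ} (hω : 0 < ω) :
    ∃ δ > 0, ∀ q ∈ Icc s T, ∀ q' ∈ Icc s T, |q - q'| < δ → Clo m v C₀ ω q q' := by
  have hC := F.hC
  choose! D hD hD' using fun t ht => F.cont t ht (ω / 2) (half_pos hω)
  obtain ⟨δ, hδ, hl⟩ := lebesgue_number_lemma_of_metric (s := Icc s T)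
    (c := fun t : Icc s T => Metric.ball (t : ℝ) (D t)) isCompact_Icc
    (fun _ => Metric.isOpen_ball) (fun t ht => mem_iUnion.2 ⟨⟨t, ht⟩, by
      simp only [Metric.mem_ball, dist_self]; exact hD t ht⟩)
  refine ⟨δ, hδ, fun q hq q' hq' hqq => ?_⟩
  obtain ⟨⟨t, ht⟩, hb⟩ := hl q hq
  have b1 : |q - t| < D t := by
    have := hb (Metric.mem_ball_self hδ)
    rwa [Metric.mem_ball, Real.dist_eq] at this
  have b2 : |q' - t| < D t := by
    have := hb (show q' ∈ Metric.ball q δ by rw [Metric.mem_ball, Real.dist_eq, abs_sub_comm]; exact hqq)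
    rwa [Metric.mem_ball, Real.dist_eq] at this
  have w1 := hD' t ht q hq b1
  have w2 := hD' t ht q' hq' b2
  have c1 := F.clo q t
  have c2 := F.clo q' t
  constructor
  · intro g L hL hg
    have e1 := c1.int g L hL hg
    have e2 := c2.int g L hL hg
    have := abs_sub_le (∫ x, g x ∂(m q).1) (∫ x, g x ∂(m t).1) (∫ x, g x ∂(m q').1)
    rw [abs_sub_comm (∫ x, g x ∂(m t).1)] at this
    nlinarith
  · intro x
    have e1 := c1.vel x
    have e2 := c2.vel x
    have := norm_sub_le_norm_sub_add_norm_sub (v q x) (v t x) (v q' x)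
    rw [norm_sub_rev (v t x)] at this
    nlinarith

theorem FieldHyp.H_clo {d : ℕ} {m : ℝ → P2 d} {v : ℝ → Ed d → Ed d} {s T C₀ A : ℝ}
    (F : FieldHyp m v s T C₀ A) {φ : Ed d → ℝ} {L K ρ : ℝ} (h : Tst φ L K ρ) {q q' ω : ℝ}
    (hq : q ∈ Icc s T) (hq' : q' ∈ Icc s T) (hc : Clo m v C₀ ω q q') :
    |∫ x, fderiv ℝ φ x (v q x) ∂(m q).1 - ∫ x, fderiv ℝ φ x (v q' x) ∂(m q').1|
      ≤ (K * (A * (1 + ρ)) + 2 * L * C₀) * ω := by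
  have := aux_prob (m q')
  have hA := F.hA; have hC := F.hC; have hK := h.hK; have hL := h.hL; have hρ := h.hρ
  have h1 := hc.int _ (K * (A * (1 + ρ)) + L * C₀) (by positivity)
    (F.H_lip h hq)
  have i1 := aux_lip_integrable (m q') (F.H_lip h hq)
  have i2 := aux_lip_integrable (m q') (F.H_lip h hq')
  have h2 : |∫ x, fderiv ℝ φ x (v q x) ∂(m q').1 - ∫ x, fderiv ℝ φ x (v q' x) ∂(m q').1| ≤
      L * C₀ * ω := by
    rw [← integral_sub i1 i2, ← Real.norm_eq_abs]
    have := norm_integral_le_of_norm_le_const (μ := (m q').1)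
      (f := fun x => fderiv ℝ φ x (v q x) - fderiv ℝ φ x (v q' x)) (C := L * C₀ * ω)
      (Eventually.of_forall fun x => by
        rw [← map_sub]
        refine (ContinuousLinearMap.le_opNorm _ _).trans ?_
        rw [mul_assoc]
        gcongr
        · exact h.dL x
        · exact hc.vel x)
    simpa using this
  have h3 := abs_sub_le (∫ x, fderiv ℝ φ x (v q x) ∂(m q).1) (∫ x, fderiv ℝ φ x (v q x) ∂(m q').1)
    (∫ x, fderiv ℝ φ x (v q' x) ∂(m q').1)
  linarith

theorem FieldHyp.H_cont {d : ℕ} {m : ℝ → P2 d} {v : ℝ → Ed d → Ed d} {s T C₀ A : ℝ}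
    (F : FieldHyp m v s T C₀ A) {φ : Ed d → ℝ} {L K ρ : ℝ} (h : Tst φ L K ρ) {q q' : ℝ}
    (hq : q ∈ Icc s T) (hq' : q' ∈ Icc s T) :
    |∫ x, fderiv ℝ φ x (v q x) ∂(m q).1 - ∫ x, fderiv ℝ φ x (v q' x) ∂(m q').1|
      ≤ (K * (A * (1 + ρ)) + 2 * L * C₀) * W2 (m q) (m q') :=
  F.H_clo h hq hq' (F.clo q q')

theorem FieldHyp.weak {d : ℕ} {m : ℝ → P2 d} {v : ℝ → Ed d → Ed d} {s T C₀ A : ℝ}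
    (F : FieldHyp m v s T C₀ A) {φ : Ed d → ℝ} {L K ρ : ℝ} (h : Tst φ L K ρ) {a b : ℝ}
    (ha : a ∈ Icc s T) (hb : b ∈ Icc s T) :
    ∫ x, φ x ∂(m b).1 - ∫ x, φ x ∂(m a).1 =
      ∫ q in a..b, ∫ x, fderiv ℝ φ x (v q x) ∂(m q).1 := by
  set G : ℝ → ℝ := fun q => ∫ x, φ x ∂(m q).1 with hG
  set H : ℝ → ℝ := fun q => ∫ x, fderiv ℝ φ x (v q x) ∂(m q).1 with hH
  have hGc : ContinuousOn G (Icc s T) := aux_contOn F.cont fun q hq q' hq' =>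
    aux_lip_W2 (m q) (m q') h.hL h.lip
  have hHc : ContinuousOn H (Icc s T) := aux_contOn F.cont fun q hq q' hq' => F.H_cont h hq hq'
  let pr : ℝ → ℝ := fun t => (projIcc s T F.hst.le t : ℝ)
  have hprc : Continuous pr := continuous_subtype_val.comp continuous_projIcc
  have hprm : ∀ t, pr t ∈ Icc s T := fun t => (projIcc s T F.hst.le t).2
  have hpr : ∀ t ∈ Icc s T, pr t = t := fun t ht => by
    simp only [pr]; rw [projIcc_of_mem F.hst.le ht]
  have hG' : Continuous fun t => G (pr t) := hGc.comp_continuous hprc hprm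
  have hH' : Continuous fun t => H (pr t) := hHc.comp_continuous hprc hprm
  have main := aux_duBoisReymond F.hst hG' hH' ?_ a ha b hb
  · simp only [hpr a ha, hpr b hb] at main
    change G b - G a = ∫ q in a..b, H q
    rw [main]
    apply intervalIntegral.integral_congr
    intro t ht
    simp only
    rw [hpr]
    have : uIcc a b ⊆ Icc s T := by
      rw [← uIcc_of_le F.hst.le]
      apply uIcc_subset_uIcc <;> rw [uIcc_of_le F.hst.le] <;> assumption
    exact this ht
  · intro η h1 h2 h3
    have hce := F.ce (fun p => φ p.1 * η p.2) ?_ ?_ ?_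
    · rw [← hce]
      apply intervalIntegral.integral_congr
      intro t ht
      rw [uIcc_of_le F.hst.le] at ht
      simp only
      rw [hpr t ht]
      have e : ∀ x, deriv (fun s => φ x * η s) t + (fderiv ℝ (fun y => φ y * η t) x) (v t x)
          = deriv η t * φ x + η t * fderiv ℝ φ x (v t x) := by
        intro x
        rw [deriv_const_mul_field]
        have hd : DifferentiableAt ℝ φ x := h.smooth.differentiable (by simp) x
        rw [fderiv_mul_const hd]
        simp
        ring
      simp_rw [e]
      rw [integral_add ((aux_lip_integrable (m t) h.lip).const_mul _)
        ((aux_lip_integrable (m t) (F.H_lip h ht)).const_mul _), integral_const_mul,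
        integral_const_mul]
    · exact (h.smooth.comp contDiff_fst).mul (h1.comp contDiff_snd)
    · refine HasCompactSupport.intro (h.compact.prod h2) fun p hp => ?_
      simp only [mem_prod, not_and_or] at hp
      rcases hp with hp | hp
      · simp [image_eq_zero_of_notMem_tsupport hp]
      · simp [image_eq_zero_of_notMem_tsupport hp]
    · have : tsupport (fun p : Ed d × ℝ => φ p.1 * η p.2) ⊆ univ ×ˢ tsupport η := by
        apply closure_minimal _ (isClosed_univ.prod (isClosed_tsupport η))
        intro p hp
        refine ⟨mem_univ _, subset_tsupport η ?_⟩
        intro hc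
        apply hp
        simp [hc]
      exact this.trans (prod_mono_right h3)

theorem Tst.taylor {d : ℕ} {φ : Ed d → ℝ} {L K ρ : ℝ} (h : Tst φ L K ρ) (x w : Ed d) :
    |φ (x + w) - φ x - fderiv ℝ φ x w| ≤ K * ‖w‖ ^ 2 := by
  have := Convex.norm_image_sub_le_of_norm_fderiv_le' (𝕜 := ℝ) (f := φ) (C := K * ‖w‖)
    (φ := fderiv ℝ φ x) (s := Metric.closedBall x ‖w‖) (x := x) (y := x + w)
    (fun x _ => h.smooth.differentiable (by simp) x) (fun y hy => by
      refine (h.dK y x).trans ?_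
      have hK := h.hK
      gcongr
      simpa [dist_eq_norm] using hy) (convex_closedBall _ _) (by simp) (by simp)
  simp only [add_sub_cancel_left, Real.norm_eq_abs] at this
  linarith

theorem FieldHyp.step {d : ℕ} {m : ℝ → P2 d} {v : ℝ → Ed d → Ed d} {s T C₀ A : ℝ}
    (F : FieldHyp m v s T C₀ A) {φ : Ed d → ℝ} {L K ρ : ℝ} (h : Tst φ L K ρ) {a τ ω : ℝ}
    (ha : a ∈ Icc s T) (hb : a + τ ∈ Icc s T) (hτ : 0 ≤ τ) (hτA : τ * A ≤ 1 / 2)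
    (hω : ∀ q ∈ Icc a (a + τ), Clo m v C₀ ω q a) :
    |∫ x, φ x ∂(m (a + τ)).1 - ∫ x, φ (x + τ • v a x) ∂(m a).1| ≤
      τ * ((K * (A * (1 + ρ)) + 2 * L * C₀) * ω + τ * (K * (2 * A * (1 + ρ)) ^ 2)) := by
  have := aux_prob (m a)
  have hA := F.hA; have hC := F.hC; have hK := h.hK; have hL := h.hL; have hρ := h.hρ
  set H : ℝ → ℝ := fun q => ∫ x, fderiv ℝ φ x (v q x) ∂(m q).1 with hH
  have hHc : ContinuousOn H (Icc s T) := aux_contOn F.cont fun q hq q' hq' => F.H_cont h hq hq'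
  have hsub : Icc a (a + τ) ⊆ Icc s T := Icc_subset_Icc ha.1 hb.2
  have w := F.weak h ha hb
  have hle : a ≤ a + τ := by linarith
  have hHi : IntervalIntegrable H volume a (a + τ) :=
    ContinuousOn.intervalIntegrable_of_Icc hle (hHc.mono hsub)
  have h1 : |(∫ q in a..(a + τ), H q) - τ * H a| ≤
      ((K * (A * (1 + ρ)) + 2 * L * C₀) * ω) * τ := by
    have e : (∫ q in a..(a + τ), H q) - τ * H a = ∫ q in a..(a + τ), (H q - H a) := by
      rw [intervalIntegral.integral_sub hHi (by simp)]
      simp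
    rw [e]
    have := intervalIntegral.norm_integral_le_of_norm_le_const (a := a) (b := a + τ)
      (f := fun q => H q - H a) (C := (K * (A * (1 + ρ)) + 2 * L * C₀) * ω) (fun q hq => by
        rw [uIoc_of_le hle] at hq
        have hq' : q ∈ Icc a (a + τ) := ⟨hq.1.le, hq.2⟩
        exact F.H_clo h (hsub hq') ha (hω q hq'))
    simpa [abs_of_nonneg hτ] using this
  have hE : ∀ x y, |φ (x + τ • v a x) - φ (y + τ • v a y)| ≤ (L * (1 + τ * C₀)) * ‖x - y‖ := by
    intro x y
    refine (h.lip _ _).trans ?_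
    have e : x + τ • v a x - (y + τ • v a y) = (x - y) + τ • (v a x - v a y) := by
      rw [smul_sub]; abel
    rw [e, mul_assoc]
    gcongr
    refine (norm_add_le _ _).trans ?_
    rw [norm_smul, Real.norm_eq_abs, abs_of_nonneg hτ]
    have := mul_le_mul_of_nonneg_left (F.lipx a x y) hτ
    linarith
  have i1 := aux_lip_integrable (m a) hE
  have i2 := aux_lip_integrable (m a) h.lip
  have i3 := aux_lip_integrable (m a) (F.H_lip h ha)
  have h2 : |∫ x, φ (x + τ • v a x) ∂(m a).1 - ∫ x, φ x ∂(m a).1 - τ * H a| ≤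
      τ ^ 2 * (K * (2 * A * (1 + ρ)) ^ 2) := by
    simp only [hH]
    have i12 : Integrable (fun x => φ (x + τ • v a x) - φ x) (m a).1 := i1.sub i2
    have i3' : Integrable (fun x => τ * fderiv ℝ φ x (v a x)) (m a).1 := i3.const_mul τ
    rw [← integral_const_mul, ← integral_sub i1 i2, ← integral_sub i12 i3',
      ← Real.norm_eq_abs]
    have := norm_integral_le_of_norm_le_const (μ := (m a).1)
      (f := fun x => φ (x + τ • v a x) - φ x - τ * fderiv ℝ φ x (v a x))
      (C := τ ^ 2 * (K * (2 * A * (1 + ρ)) ^ 2))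
      (Eventually.of_forall fun x => by
        have hv := F.growth a ha x
        by_cases hx : ‖x‖ ≤ 1 + 2 * ρ
        · have ht := h.taylor x (τ • v a x)
          simp only [map_smul, smul_eq_mul] at ht
          refine ht.trans ?_
          rw [norm_smul, Real.norm_eq_abs, abs_of_nonneg hτ, mul_pow]
          have : ‖v a x‖ ≤ 2 * A * (1 + ρ) := by nlinarith
          calc K * (τ ^ 2 * ‖v a x‖ ^ 2) ≤ K * (τ ^ 2 * (2 * A * (1 + ρ)) ^ 2) := by gcongr
            _ = _ := by ring
        · push Not at hx
          have hx1 : ρ < ‖x‖ := by linarith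
          have hx2 : ρ < ‖x + τ • v a x‖ := by
            have e1 : ‖x‖ - ‖τ • v a x‖ ≤ ‖x + τ • v a x‖ := by
              have := norm_sub_norm_le x (-(τ • v a x)); simpa using this
            rw [norm_smul, Real.norm_eq_abs, abs_of_nonneg hτ] at e1
            have e2 : τ * ‖v a x‖ ≤ 1 / 2 * (1 + ‖x‖) := by
              calc τ * ‖v a x‖ ≤ τ * (A * (1 + ‖x‖)) := by gcongr
                _ = τ * A * (1 + ‖x‖) := by ring
                _ ≤ _ := by gcongr
            linarith
          rw [h.supp _ hx1, h.supp _ hx2, h.fderiv_zero hx1]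
          simp only [sub_self, zero_apply, mul_zero, norm_zero]
          positivity)
    simpa using this
  have e : ∫ x, φ x ∂(m (a + τ)).1 - ∫ x, φ (x + τ • v a x) ∂(m a).1 =
    ((∫ q in a..(a + τ), H q) - τ * H a) -
      (∫ x, φ (x + τ • v a x) ∂(m a).1 - ∫ x, φ x ∂(m a).1 - τ * H a) := by
    rw [← w]; ring
  rw [e]
  refine (abs_sub _ _).trans ?_
  nlinarith


theorem aux_avg_le {d : ℕ} (b : ContDiffBump (0 : Ed d)) {G : Ed d → ℝ} {c : ℝ} (hc : 0 ≤ c)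
    (h : ∀ y, ‖y‖ ≤ b.rOut → |G y| ≤ c) :
    |∫ y, b.normed volume y * G y| ≤ c := by
  rw [← Real.norm_eq_abs]
  have := norm_integral_le_of_norm_le (μ := volume) (f := fun y => b.normed volume y * G y)
    (g := fun y => b.normed volume y * c) (b.integrable_normed.mul_const c)
    (Eventually.of_forall fun y => by
      rw [norm_mul, Real.norm_eq_abs, Real.norm_eq_abs, abs_of_nonneg (b.nonneg_normed y)]
      by_cases hy : ‖y‖ ≤ b.rOut
      · exact mul_le_mul_of_nonneg_left (h y hy) (b.nonneg_normed y)
      · have : b.normed volume y = 0 := by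
          rw [← Function.notMem_support, b.support_normed_eq]
          simp only [Metric.mem_ball, dist_zero_right, not_lt]
          exact (not_le.1 hy).le
        simp [this])
  rwa [integral_mul_const, b.integral_normed, one_mul] at this

theorem aux_avg_int {d : ℕ} (b : ContDiffBump (0 : Ed d)) {G : Ed d → ℝ} (hG : Continuous G) :
    Integrable (fun y => b.normed volume y * G y) volume :=
  (b.continuous_normed.mul hG).integrable_of_hasCompactSupport b.hasCompactSupport_normed.mul_right

def moll {d : ℕ} (b : ContDiffBump (0 : Ed d)) (g : Ed d → ℝ) (x : Ed d) : ℝ :=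
  ∫ y, b.normed volume y * g (x - y)

theorem moll_sub {d : ℕ} (b : ContDiffBump (0 : Ed d)) {g g' : Ed d → ℝ} (hg : Continuous g)
    (hg' : Continuous g') (x x' : Ed d) :
    moll b g x - moll b g' x' = ∫ y, b.normed volume y * (g (x - y) - g' (x' - y)) := by
  unfold moll
  rw [← integral_sub (aux_avg_int b (by fun_prop)) (aux_avg_int b (by fun_prop))]
  simp_rw [mul_sub]

theorem moll_lip {d : ℕ} (b : ContDiffBump (0 : Ed d)) {g : Ed d → ℝ} {L : ℝ} (hL : 0 ≤ L)
    (hg : ∀ x y, |g x - g y| ≤ L * ‖x - y‖) (x x' : Ed d) :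
    |moll b g x - moll b g x'| ≤ L * ‖x - x'‖ := by
  have hc := aux_lip_continuous hg
  rw [moll_sub b hc hc]
  refine aux_avg_le b (by positivity) fun y _ => ?_
  simpa using hg (x - y) (x' - y)

theorem moll_close {d : ℕ} (b : ContDiffBump (0 : Ed d)) {g : Ed d → ℝ} {L : ℝ} (hL : 0 ≤ L)
    (hg : ∀ x y, |g x - g y| ≤ L * ‖x - y‖) (x : Ed d) :
    |moll b g x - g x| ≤ L * b.rOut := by
  have hc := aux_lip_continuous hg
  have e : moll b g x - g x = ∫ y, b.normed volume y * (g (x - y) - g x) := by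
    simp_rw [mul_sub]
    rw [integral_sub (aux_avg_int b (by fun_prop)) (aux_avg_int b (by fun_prop)),
      integral_mul_const, b.integral_normed, one_mul]
    rfl
  rw [e]
  refine aux_avg_le b (mul_nonneg hL b.rOut_pos.le) fun y hy => ?_
  refine (hg _ _).trans ?_
  gcongr
  simpa using hy

theorem moll_comm {d : ℕ} (b : ContDiffBump (0 : Ed d)) {g : Ed d → ℝ} {L : ℝ} (hL : 0 ≤ L)
    (hg : ∀ x y, |g x - g y| ≤ L * ‖x - y‖) {w : Ed d → Ed d} {C h : ℝ} (hC : 0 ≤ C)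
    (hw : ∀ x y, ‖w x - w y‖ ≤ C * ‖x - y‖) (hwc : Continuous w) (hh : 0 ≤ h) (x : Ed d) :
    |moll b g (x + h • w x) - moll b (fun z => g (z + h • w z)) x| ≤ h * (L * C * b.rOut) := by
  have hc := aux_lip_continuous hg
  rw [moll_sub b hc (by fun_prop)]
  have := b.rOut_pos
  refine aux_avg_le b (by positivity) fun y hy => ?_
  refine (hg _ _).trans ?_
  have e : x + h • w x - y - (x - y + h • w (x - y)) = h • (w x - w (x - y)) := by
    rw [smul_sub]; abel
  rw [e, norm_smul, Real.norm_eq_abs, abs_of_nonneg hh]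
  have h1 := hw x (x - y)
  rw [sub_sub_cancel] at h1
  calc L * (h * ‖w x - w (x - y)‖) ≤ L * (h * (C * b.rOut)) := by
        gcongr
        exact h1.trans (by gcongr)
    _ = _ := by ring

theorem moll_supp {d : ℕ} (b : ContDiffBump (0 : Ed d)) {g : Ed d → ℝ} {ρ : ℝ}
    (hs : ∀ x, ρ < ‖x‖ → g x = 0) (x : Ed d) (hx : ρ + b.rOut < ‖x‖) : moll b g x = 0 := by
  have := aux_avg_le b (G := fun y => g (x - y)) le_rfl (fun y hy => by
    rw [hs, abs_zero]
    have := norm_sub_norm_le x y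
    linarith)
  exact abs_nonpos_iff.1 this

theorem moll_conv {d : ℕ} (b : ContDiffBump (0 : Ed d)) (g : Ed d → ℝ) :
    moll b g = convolution g (b.normed volume) (ContinuousLinearMap.mul ℝ ℝ) volume := by
  ext x
  rw [convolution_mul_swap]
  unfold moll
  simp_rw [mul_comm]

theorem moll_smooth {d : ℕ} (b : ContDiffBump (0 : Ed d)) {g : Ed d → ℝ} (hc : Continuous g) :
    ContDiff ℝ (⊤ : ℕ∞) (moll b g) := by
  rw [moll_conv]
  exact b.hasCompactSupport_normed.contDiff_convolution_right _ hc.locallyIntegrable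
      b.contDiff_normed

theorem bump_cd {d : ℕ} (b : ContDiffBump (0 : Ed d)) :
    ContDiff ℝ 1 (b.normed (volume : Measure (Ed d))) := by
  exact_mod_cast b.contDiff_normed (n := 1)

theorem aux_precompR {d : ℕ} (c : ℝ) (D : Ed d →L[ℝ] ℝ) :
    (ContinuousLinearMap.precompR (Ed d) (ContinuousLinearMap.mul ℝ ℝ)) c D = c • D := by
  refine ContinuousLinearMap.ext fun z => ?_
  rfl

theorem moll_fderiv {d : ℕ} (b : ContDiffBump (0 : Ed d)) {g : Ed d → ℝ} (hc : Continuous g)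
    (x : Ed d) :
    fderiv ℝ (moll b g) x = ∫ y, g (x - y) • fderiv ℝ (b.normed volume) y := by
  rw [moll_conv, (b.hasCompactSupport_normed.hasFDerivAt_convolution_right
      (ContinuousLinearMap.mul ℝ ℝ) hc.locallyIntegrable (bump_cd b) x).fderiv, convolution_eq_swap]
  refine integral_congr_ae (Eventually.of_forall fun y => ?_)
  exact aux_precompR _ _

theorem moll_dK {d : ℕ} {D : Ed d → (Ed d →L[ℝ] ℝ)} (hdc : Continuous D)
    (hcs : HasCompactSupport D) {g : Ed d → ℝ} {L : ℝ}
    (hg : ∀ x y, |g x - g y| ≤ L * ‖x - y‖) (x x' : Ed d) :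
    ‖(∫ y, g (x - y) • D y) - ∫ y, g (x' - y) • D y‖ ≤ (L * ∫ y, ‖D y‖) * ‖x - x'‖ := by
  have hc := aux_lip_continuous hg
  have hi : ∀ x, Integrable (fun y => g (x - y) • D y) volume := by
    intro x
    have h1 : Continuous (fun y => g (x - y) • D y) :=
      (hc.comp (continuous_const.sub continuous_id)).smul hdc
    exact h1.integrable_of_hasCompactSupport (hcs.smul_left (f := fun y => g (x - y)))
  have hni : Integrable (fun y => ‖D y‖) (volume : Measure (Ed d)) :=
    (hdc.integrable_of_hasCompactSupport hcs).norm
  rw [← integral_sub (hi x) (hi x')]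
  refine (norm_integral_le_of_norm_le (hni.const_mul (L * ‖x - x'‖))
    (Eventually.of_forall fun y => ?_)).trans ?_
  · have e : g (x - y) • D y - g (x' - y) • D y = (g (x - y) - g (x' - y)) • D y := by
      module
    rw [e, norm_smul, Real.norm_eq_abs]
    refine mul_le_mul_of_nonneg_right ?_ (norm_nonneg _)
    simpa using hg (x - y) (x' - y)
  · rw [integral_const_mul]
    exact le_of_eq (by ring)

theorem moll_dL {d : ℕ} (b : ContDiffBump (0 : Ed d)) {g : Ed d → ℝ} {L : ℝ} (hL : 0 ≤ L)
    (hg : ∀ x y, |g x - g y| ≤ L * ‖x - y‖) (x : Ed d) : ‖fderiv ℝ (moll b g) x‖ ≤ L := by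
  have : LipschitzWith (Real.toNNReal L) (moll b g) := by
    refine LipschitzWith.of_dist_le_mul fun x y => ?_
    rw [Real.dist_eq, dist_eq_norm, Real.coe_toNNReal L hL]
    exact moll_lip b hL hg x y
  have := norm_fderiv_le_of_lipschitz (𝕜 := ℝ) (x₀ := x) this
  rwa [Real.coe_toNNReal L hL] at this

theorem moll_tst {d : ℕ} (b : ContDiffBump (0 : Ed d)) :
    ∃ κ : ℝ, 0 ≤ κ ∧ ∀ (g : Ed d → ℝ) (L ρ : ℝ), 0 ≤ L → 0 ≤ ρ →
      (∀ x y, |g x - g y| ≤ L * ‖x - y‖) → (∀ x, ρ < ‖x‖ → g x = 0) →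
      Tst (moll b g) L (L * κ) (ρ + b.rOut) := by
  have hdc : Continuous (fderiv ℝ (b.normed (volume : Measure (Ed d)))) :=
    (bump_cd b).continuous_fderiv (by simp)
  have hcs : HasCompactSupport (fderiv ℝ (b.normed (volume : Measure (Ed d)))) :=
    b.hasCompactSupport_normed.fderiv ℝ
  have hκ : 0 ≤ ∫ y, ‖fderiv ℝ (b.normed (volume : Measure (Ed d))) y‖ :=
    integral_nonneg fun _ => norm_nonneg _
  refine ⟨_, hκ, fun g L ρ hL hρ hg hs => ?_⟩
  have hc := aux_lip_continuous hg
  have hr := b.rOut_pos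
  exact ⟨hL, mul_nonneg hL hκ, by positivity, moll_smooth b hc, moll_supp b hs, moll_dL b hL hg,
    fun x x' => by
      rw [moll_fderiv b hc, moll_fderiv b hc]
      exact moll_dK hdc hcs hg x x'⟩


def eul {d : ℕ} (v : ℝ → Ed d → Ed d) (s h : ℝ) : ℕ → Ed d → Ed d
  | 0, z => z
  | k + 1, z => eul v s h k z + h • v (s + k * h) (eul v s h k z)

theorem FieldHyp.eul_lip {d : ℕ} {m : ℝ → P2 d} {v : ℝ → Ed d → Ed d} {s T C₀ A : ℝ}
    (F : FieldHyp m v s T C₀ A) {h : ℝ} (hh : 0 ≤ h) (a : ℝ) (x y : Ed d) :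
    ‖(x + h • v a x) - (y + h • v a y)‖ ≤ (1 + h * C₀) * ‖x - y‖ := by
  have e : x + h • v a x - (y + h • v a y) = (x - y) + h • (v a x - v a y) := by
    rw [smul_sub]; abel
  rw [e]
  refine (norm_add_le _ _).trans ?_
  rw [norm_smul, Real.norm_eq_abs, abs_of_nonneg hh]
  have := mul_le_mul_of_nonneg_left (F.lipx a x y) hh
  linarith

theorem FieldHyp.eul_lipN {d : ℕ} {m : ℝ → P2 d} {v : ℝ → Ed d → Ed d} {s T C₀ A : ℝ}
    (F : FieldHyp m v s T C₀ A) {h : ℝ} (hh : 0 ≤ h) (k : ℕ) (x y : Ed d) :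
    ‖eul v s h k x - eul v s h k y‖ ≤ (1 + h * C₀) ^ k * ‖x - y‖ := by
  have hC := F.hC
  induction k with
  | zero => simp [eul]
  | succ k ih =>
    refine (F.eul_lip hh _ _ _).trans ?_
    rw [pow_succ', mul_assoc]
    gcongr

theorem FieldHyp.eul_scheme {d : ℕ} {m : ℝ → P2 d} {v : ℝ → Ed d → Ed d} {s T C₀ A : ℝ}
    (F : FieldHyp m v s T C₀ A) (b : ContDiffBump (0 : Ed d)) {κ : ℝ} (hκ : 0 ≤ κ)
    (hb : ∀ (g : Ed d → ℝ) (L ρ : ℝ), 0 ≤ L → 0 ≤ ρ →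
      (∀ x y, |g x - g y| ≤ L * ‖x - y‖) → (∀ x, ρ < ‖x‖ → g x = 0) →
      Tst (moll b g) L (L * κ) (ρ + b.rOut))
    {h ω Lb Pb : ℝ} (hh : 0 ≤ h) (hhA : h * A ≤ 1 / 2) (hω : 0 ≤ ω)
    (hclo : ∀ q ∈ Icc s T, ∀ q' ∈ Icc s T, |q - q'| ≤ h → Clo m v C₀ ω q q') (k : ℕ) :
    s + k * h ≤ T → ∀ (φ : Ed d → ℝ) (L P : ℝ), 0 ≤ L → 1 ≤ P →
      L * (1 + h * C₀) ^ k ≤ Lb → P ≤ Pb * (1 - h * A) ^ k →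
      (∀ x y, |φ x - φ y| ≤ L * ‖x - y‖) → (∀ x, P < 1 + ‖x‖ → φ x = 0) →
      |∫ x, moll b φ x ∂(m (s + k * h)).1 - ∫ x, moll b (fun z => φ (eul v s h k z)) x ∂(m s).1|
        ≤ k * (h * (Lb * C₀ * b.rOut + ((Lb * κ * (A * (Pb + b.rOut)) + 2 * Lb * C₀) * ω +
          h * (Lb * κ * (2 * A * (Pb + b.rOut)) ^ 2)))) := by
  have hC := F.hC
  have hA := F.hA
  have hr := b.rOut_pos
  induction k with
  | zero =>
    intro _ φ L P _ _ _ _ _ _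
    simp [eul]
  | succ k ih =>
    intro hT φ L P hL hP hLb hPb hlip hsupp
    push_cast at hT
    have hk : s + k * h ≤ T := by linarith
    have hk0 : 0 ≤ (k : ℝ) * h := by positivity
    have hrk : s + k * h ∈ Icc s T := ⟨by linarith, hk⟩
    have hrk' : s + k * h + h ∈ Icc s T := ⟨by linarith, by linarith⟩
    have h1C : 1 ≤ 1 + h * C₀ := by nlinarith [mul_nonneg hh hC]
    have hA0 : 0 ≤ h * A := by positivity
    have hA1 : 0 < 1 - h * A := by linarith
    have hA2 : 1 - h * A ≤ 1 := by linarith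
    have hLb0 : 0 ≤ Lb := le_trans (by positivity) hLb
    have hLLb : L ≤ Lb := le_trans (le_mul_of_one_le_right hL (one_le_pow₀ h1C)) hLb
    have hpw : (1 - h * A) ^ (k + 1) ≤ 1 := pow_le_one₀ hA1.le hA2
    have hpw0 : 0 < (1 - h * A) ^ (k + 1) := by positivity
    have hPb1 : 1 ≤ Pb := by
      by_contra hcon
      push Not at hcon
      by_cases h0 : 0 ≤ Pb
      · nlinarith
      · nlinarith
    have hPPb : P ≤ Pb := by nlinarith
    set a := s + k * h with ha
    set ψ : Ed d → ℝ := fun z => φ (z + h • v a z) with hψ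
    have hlipb : ∀ x y, |φ x - φ y| ≤ Lb * ‖x - y‖ := fun x y =>
      (hlip x y).trans (by gcongr)
    have hψlip : ∀ x y, |ψ x - ψ y| ≤ (L * (1 + h * C₀)) * ‖x - y‖ := by
      intro x y
      refine (hlip _ _).trans ?_
      rw [mul_assoc]
      gcongr
      exact F.eul_lip hh a x y
    have tst := hb φ Lb (Pb - 1) hLb0 (by linarith) hlipb (fun x hx => hsupp x (by linarith))
    have st := F.step tst hrk hrk' hh hhA (fun q hq => hclo q
      ⟨by linarith [hq.1], by linarith [hq.2, hrk'.2]⟩ a hrk (by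
        rw [abs_of_nonneg (by linarith [hq.1])]; linarith [hq.2]))
    have e1 : 1 + (Pb - 1 + b.rOut) = Pb + b.rOut := by ring
    rw [e1] at st
    have := aux_prob (m a)
    have i1 : Integrable (fun x => moll b φ (x + h • v a x)) (m a).1 := by
      refine aux_lip_integrable (m a) (L := Lb * (1 + h * C₀)) fun x y => ?_
      refine (moll_lip b hLb0 hlipb _ _).trans ?_
      rw [mul_assoc]
      gcongr
      exact F.eul_lip hh a x y
    have i2 : Integrable (fun x => moll b ψ x) (m a).1 :=
      aux_lip_integrable (m a) (moll_lip b (by positivity) hψlip)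
    have cm : |∫ x, moll b φ (x + h • v a x) ∂(m a).1 - ∫ x, moll b ψ x ∂(m a).1| ≤
        h * (Lb * C₀ * b.rOut) := by
      rw [← integral_sub i1 i2, ← Real.norm_eq_abs]
      have := norm_integral_le_of_norm_le_const (μ := (m a).1)
        (f := fun x => moll b φ (x + h • v a x) - moll b ψ x) (C := h * (Lb * C₀ * b.rOut))
        (Eventually.of_forall fun x =>
          moll_comm b hLb0 hlipb hC (F.lipx a) (F.continuous a) hh x)
      simpa using this
    have hi := ih hk ψ (L * (1 + h * C₀)) (P / (1 - h * A)) (by positivity)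
      (by rw [le_div_iff₀ hA1]; linarith)
      (by rw [mul_assoc, ← pow_succ']; exact hLb)
      (by rw [div_le_iff₀ hA1, mul_assoc, ← pow_succ]; exact hPb) hψlip (fun x hx => by
        apply hsupp
        rw [div_lt_iff₀ hA1] at hx
        have g1 : ‖x‖ - ‖h • v a x‖ ≤ ‖x + h • v a x‖ := by
          have := norm_sub_norm_le x (-(h • v a x)); simpa using this
        rw [norm_smul, Real.norm_eq_abs, abs_of_nonneg hh] at g1
        have g2 := mul_le_mul_of_nonneg_left (F.growth a hrk x) hh
        nlinarith)
    have e2 : (fun z => ψ (eul v s h k z)) = fun z => φ (eul v s h (k + 1) z) := rfl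
    rw [e2] at hi
    have e3 : s + ((k + 1 : ℕ) : ℝ) * h = a + h := by push_cast; rw [ha]; ring
    rw [e3]
    have t1 := abs_sub_le (∫ x, moll b φ x ∂(m (a + h)).1) (∫ x, moll b φ (x + h • v a x) ∂(m a).1)
      (∫ x, moll b (fun z => φ (eul v s h (k + 1) z)) x ∂(m s).1)
    have t2 := abs_sub_le (∫ x, moll b φ (x + h • v a x) ∂(m a).1) (∫ x, moll b ψ x ∂(m a).1)
      (∫ x, moll b (fun z => φ (eul v s h (k + 1) z)) x ∂(m s).1)
    push_cast
    linarith

theorem moll_int_close {d : ℕ} (b : ContDiffBump (0 : Ed d)) {g : Ed d → ℝ} {L : ℝ} (hL : 0 ≤ L)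
    (hg : ∀ x y, |g x - g y| ≤ L * ‖x - y‖) (μ : P2 d) :
    |∫ x, moll b g x ∂μ.1 - ∫ x, g x ∂μ.1| ≤ L * b.rOut := by
  have := aux_prob μ
  rw [← integral_sub (aux_lip_integrable μ (moll_lip b hL hg)) (aux_lip_integrable μ hg),
    ← Real.norm_eq_abs]
  have := norm_integral_le_of_norm_le_const (μ := μ.1)
        (f := fun x => moll b g x - g x) (C := L * b.rOut)
        (Eventually.of_forall fun x => moll_close b hL hg x)
  simpa using this

theorem aux_exp_pow {x : ℝ} (hx : 0 ≤ x) (hx2 : x ≤ 1 / 2) : 1 ≤ Real.exp (2 * x) * (1 - x) := by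
  have := Real.add_one_le_exp (2 * x)
  nlinarith

set_option maxHeartbeats 1000000 in
theorem FieldHyp.eul_tendsto {d : ℕ} {m : ℝ → P2 d} {v : ℝ → Ed d → Ed d} {s T C₀ A : ℝ}
    (F : FieldHyp m v s T C₀ A) {t : ℝ} (ht : t ∈ Icc s T) {φ : Ed d → ℝ} {L ρ : ℝ} (hL : 0 ≤ L)
    (hρ : 0 ≤ ρ) (hlip : ∀ x y, |φ x - φ y| ≤ L * ‖x - y‖) (hsupp : ∀ x, ρ < ‖x‖ → φ x = 0) :
    Tendsto (fun n : ℕ => ∫ x, φ (eul v s ((t - s) / (n + 1 : ℕ)) (n + 1) x) ∂(m s).1) atTop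
      (𝓝 (∫ x, φ x ∂(m t).1)) := by
  have hC := F.hC
  have hA := F.hA
  have hts : 0 ≤ t - s := by linarith [ht.1]
  rw [Metric.tendsto_atTop']
  intro η hη
  set D := t - s with hD
  set Lb := L * Real.exp (C₀ * D) with hLb
  set Pb := (1 + ρ) * Real.exp (2 * A * D) with hPb
  have hLb0 : 0 ≤ Lb := by positivity
  have hPb0 : 0 ≤ Pb := by positivity
  set ε := η / (4 * (2 * Lb + D * Lb * C₀ + 1)) with hε
  have hε0 : 0 < ε := by positivity
  let b : ContDiffBump (0 : Ed d) := ⟨ε / 2, ε, by positivity, by linarith⟩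
  have hbr : b.rOut = ε := rfl
  obtain ⟨κ, hκ, hb⟩ := moll_tst b
  set Q := Lb * κ * (A * (Pb + ε)) + 2 * Lb * C₀ with hQ
  have hQ0 : 0 ≤ Q := by positivity
  set Q2 := Lb * κ * (2 * A * (Pb + ε)) ^ 2 with hQ2
  have hQ20 : 0 ≤ Q2 := by positivity
  set ω := η / (4 * (D * Q + 1)) with hω
  have hω0 : 0 < ω := by positivity
  obtain ⟨δ, hδ, hclo⟩ := F.unif hω0
  have hlim : Tendsto (fun n : ℕ => D / ((n + 1 : ℕ) : ℝ)) atTop (𝓝 0) :=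
    (tendsto_const_div_atTop_nhds_zero_nat D).comp (tendsto_add_atTop_nat 1)
  have ev : ∀ᶠ n : ℕ in atTop, D / ((n + 1 : ℕ) : ℝ) < min δ (min (1 / (2 * A)) (η / (4 * (D * Q2 + 1)))) :=
    hlim.eventually_lt_const (by positivity)
  rw [eventually_atTop] at ev
  obtain ⟨N, hN⟩ := ev
  refine ⟨N, fun n hn => ?_⟩
  have hn' := hN n hn.le
  rw [lt_min_iff, lt_min_iff] at hn'
  obtain ⟨hn1, hn2, hn3⟩ := hn'
  set h := D / ((n + 1 : ℕ) : ℝ) with hh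
  have hh0 : 0 ≤ h := by positivity
  have hNh : ((n + 1 : ℕ) : ℝ) * h = D := by
    rw [hh]; field_simp
  have hhA : h * A ≤ 1 / 2 := by
    rw [lt_div_iff₀ (by positivity)] at hn2
    linarith
  have hLpow : (1 + h * C₀) ^ (n + 1) ≤ Real.exp (C₀ * D) := by
    have : C₀ * D = ((n + 1 : ℕ) : ℝ) * (h * C₀) := by rw [← hNh]; ring
    rw [this, Real.exp_nat_mul]
    gcongr
    linarith [Real.add_one_le_exp (h * C₀)]
  have hPpow : 1 ≤ Real.exp (2 * A * D) * (1 - h * A) ^ (n + 1) := by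
    have : 2 * A * D = ((n + 1 : ℕ) : ℝ) * (2 * (h * A)) := by rw [← hNh]; ring
    rw [this, Real.exp_nat_mul, ← mul_pow]
    exact one_le_pow₀ (aux_exp_pow (by positivity) hhA)
  have hst : s + ((n + 1 : ℕ) : ℝ) * h = t := by rw [hNh, hD]; ring
  have sch := F.eul_scheme b hκ hb hh0 hhA hω0.le (Lb := Lb) (Pb := Pb)
    (fun q hq q' hq' hqq => hclo q hq q' hq' (lt_of_le_of_lt hqq hn1)) (n + 1)
    (by rw [hst]; exact ht.2) φ L (1 + ρ) hL (by linarith)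
    (by rw [hLb]; gcongr)
    (by rw [hPb, mul_assoc]; exact le_mul_of_one_le_right (by positivity) hPpow) hlip
    (fun x hx => hsupp x (by linarith))
  rw [hst, ← mul_assoc, hNh, hbr] at sch
  have hLLb : L ≤ Lb := le_mul_of_one_le_right hL (Real.one_le_exp (by positivity))
  have c1 := moll_int_close b hLb0 (fun x y => (hlip x y).trans (by gcongr)) (m t)
  have c2 := moll_int_close b hLb0 (g := fun z => φ (eul v s h (n + 1) z)) (fun x y =>
    (hlip _ _).trans (by
      rw [hLb, mul_assoc]
      gcongr
      exact (F.eul_lipN hh0 (n + 1) x y).trans (by gcongr))) (m s)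
  rw [hbr] at c1 c2
  rw [Real.dist_eq, abs_sub_comm]
  have t1 := abs_sub_le (∫ x, φ x ∂(m t).1) (∫ x, moll b φ x ∂(m t).1)
    (∫ x, φ (eul v s h (n + 1) x) ∂(m s).1)
  have t2 := abs_sub_le (∫ x, moll b φ x ∂(m t).1)
    (∫ x, moll b (fun z => φ (eul v s h (n + 1) z)) x ∂(m s).1)
    (∫ x, φ (eul v s h (n + 1) x) ∂(m s).1)
  rw [abs_sub_comm (∫ x, φ x ∂(m t).1) (∫ x, moll b φ x ∂(m t).1)] at t1
  have k1 : (2 * Lb + D * Lb * C₀ + 1) * ε = η / 4 := by rw [hε]; field_simp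
  have k2 : (D * Q + 1) * ω = η / 4 := by rw [hω]; field_simp
  have k3 : (D * Q2 + 1) * h < η / 4 := by
    rw [lt_div_iff₀ (by positivity)] at hn3
    linarith
  have k0 : D * (Lb * C₀ * ε + (Q * ω + h * Q2)) =
    (2 * Lb + D * Lb * C₀ + 1) * ε + (D * Q + 1) * ω + (D * Q2 + 1) * h
      - 2 * (Lb * ε) - ε - ω - h := by ring
  rw [k0, k1, k2] at sch
  linarith


theorem FieldHyp.vel_cont {d : ℕ} {m : ℝ → P2 d} {v : ℝ → Ed d → Ed d} {s T C₀ A : ℝ}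
    (F : FieldHyp m v s T C₀ A) {X : ℝ → Ed d} (hX : ContinuousOn X (Icc s T)) :
    ContinuousOn (fun q => v q (X q)) (Icc s T) := by
  have hC := F.hC
  rw [Metric.continuousOn_iff]
  intro t ht ε hε
  have he : 0 < ε / (2 * (C₀ + 1)) := by positivity
  obtain ⟨δ, hδ, hd⟩ := F.cont t ht _ he
  obtain ⟨δ', hδ', hd'⟩ := Metric.continuousOn_iff.1 hX t ht _ he
  refine ⟨min δ δ', lt_min hδ hδ', fun q hq hqt => ?_⟩
  have h1 := hd q hq (by rw [← Real.dist_eq]; exact lt_of_lt_of_le hqt (min_le_left _ _))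
  have h2 := hd' q hq (lt_of_lt_of_le hqt (min_le_right _ _))
  rw [dist_eq_norm] at h2 ⊢
  have h3 := F.lip q t (X q) (X t)
  have hW := aux_W2_nonneg (m q) (m t)
  have hn := norm_nonneg (X q - X t)
  have e : (C₀ + 1) * (ε / (2 * (C₀ + 1)) + ε / (2 * (C₀ + 1))) = ε := by field_simp; ring
  nlinarith

theorem FieldHyp.eul_pt {d : ℕ} {m : ℝ → P2 d} {v : ℝ → Ed d → Ed d} {s T C₀ A : ℝ}
    (F : FieldHyp m v s T C₀ A) {X : ℝ → Ed d}
    (hX : ∀ t ∈ Icc s T, HasDerivAt X (v t (X t)) t) {h ω : ℝ} (hh : 0 ≤ h) (hω : 0 ≤ ω)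
    (hu : ∀ q ∈ Icc s T, ∀ r ∈ Icc s T, |q - r| ≤ h → ‖v q (X q) - v r (X r)‖ ≤ ω) (k : ℕ) :
    s + k * h ≤ T → ‖X (s + k * h) - eul v s h k (X s)‖ ≤ k * (h * ω) * (1 + h * C₀) ^ k := by
  have hC := F.hC
  induction k with
  | zero => intro _; simp [eul]
  | succ k ih =>
    intro hT
    push_cast at hT
    have hk : s + k * h ≤ T := by linarith
    have hk0 : 0 ≤ (k : ℝ) * h := by positivity
    have ih' := ih hk
    have hrk : s + k * h ∈ Icc s T := ⟨by linarith, hk⟩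
    set r := s + k * h with hr
    have e3 : s + ((k + 1 : ℕ) : ℝ) * h = r + h := by push_cast; rw [hr]; ring
    rw [e3]
    have hmem : ∀ q ∈ Icc r (r + h), q ∈ Icc s T := fun q hq =>
      ⟨by linarith [hq.1], by linarith [hq.2]⟩
    have loc : ‖X (r + h) - X r - h • v r (X r)‖ ≤ ω * h := by
      have := norm_image_sub_le_of_norm_deriv_le_segment' (a := r) (b := r + h)
        (f := fun q => X q - (q - r) • v r (X r)) (f' := fun q => v q (X q) - v r (X r)) (C := ω)
        (fun q hq => by
          have h1 := hX q (hmem q hq)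
          have h2 : HasDerivAt (fun q => (q - r) • v r (X r)) ((1 : ℝ) • v r (X r)) q :=
            ((hasDerivAt_id q).sub_const r).smul_const _
          rw [one_smul] at h2
          exact (h1.sub h2).hasDerivWithinAt)
        (fun q hq => hu q (hmem q ⟨hq.1, hq.2.le⟩) r hrk (by
          rw [abs_of_nonneg (by linarith [hq.1])]; linarith [hq.2])) (r + h) ⟨by linarith, le_rfl⟩
      simp only [add_sub_cancel_left, sub_self, zero_smul, sub_zero] at this
      rwa [sub_right_comm] at this
    have e : X (r + h) - eul v s h (k + 1) (X s) = (X (r + h) - X r - h • v r (X r)) +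
        ((X r + h • v r (X r)) - (eul v s h k (X s) + h • v r (eul v s h k (X s)))) := by
      simp only [eul, ← hr]; abel
    rw [e]
    refine (norm_add_le _ _).trans ?_
    have l := F.eul_lip hh r (X r) (eul v s h k (X s))
    have hp : 1 ≤ (1 + h * C₀) ^ (k + 1) := one_le_pow₀ (by nlinarith [mul_nonneg hh hC])
    have l2 : (1 + h * C₀) * ‖X r - eul v s h k (X s)‖ ≤ k * (h * ω) * (1 + h * C₀) ^ (k + 1) := by
      refine (mul_le_mul_of_nonneg_left ih' (by positivity)).trans (le_of_eq ?_)
      rw [pow_succ]; ring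
    have l3 : ω * h ≤ (h * ω) * (1 + h * C₀) ^ (k + 1) := by
      rw [mul_comm ω h]; exact le_mul_of_one_le_right (by positivity) hp
    push_cast
    linarith

theorem FieldHyp.eul_pt_tendsto {d : ℕ} {m : ℝ → P2 d} {v : ℝ → Ed d → Ed d} {s T C₀ A : ℝ}
    (F : FieldHyp m v s T C₀ A) {X : ℝ → Ed d}
    (hX : ∀ t ∈ Icc s T, HasDerivAt X (v t (X t)) t) {t : ℝ} (ht : t ∈ Icc s T) :
    Tendsto (fun n : ℕ => eul v s ((t - s) / (n + 1 : ℕ)) (n + 1) (X s)) atTop (𝓝 (X t)) := by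
  have hC := F.hC
  have hts : 0 ≤ t - s := by linarith [ht.1]
  rw [Metric.tendsto_atTop']
  intro η hη
  set D := t - s with hD
  have hXc : ContinuousOn X (Icc s T) := fun q hq => (hX q hq).continuousAt.continuousWithinAt
  have huc := isCompact_Icc.uniformContinuousOn_of_continuous (F.vel_cont hXc)
  rw [Metric.uniformContinuousOn_iff] at huc
  set ω := η / (2 * (D * Real.exp (C₀ * D) + 1)) with hω
  have hω0 : 0 < ω := by positivity
  obtain ⟨δ, hδ, hu⟩ := huc ω hω0
  have hlim : Tendsto (fun n : ℕ => D / ((n + 1 : ℕ) : ℝ)) atTop (𝓝 0) :=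
    (tendsto_const_div_atTop_nhds_zero_nat D).comp (tendsto_add_atTop_nat 1)
  have ev := hlim.eventually_lt_const hδ
  rw [eventually_atTop] at ev
  obtain ⟨N, hN⟩ := ev
  refine ⟨N, fun n hn => ?_⟩
  have hn1 := hN n hn.le
  set h := D / ((n + 1 : ℕ) : ℝ) with hh
  have hh0 : 0 ≤ h := by positivity
  have hNh : ((n + 1 : ℕ) : ℝ) * h = D := by
    rw [hh]; field_simp
  have hst : s + ((n + 1 : ℕ) : ℝ) * h = t := by rw [hNh, hD]; ring
  have hLpow : (1 + h * C₀) ^ (n + 1) ≤ Real.exp (C₀ * D) := by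
    have : C₀ * D = ((n + 1 : ℕ) : ℝ) * (h * C₀) := by rw [← hNh]; ring
    rw [this, Real.exp_nat_mul]
    gcongr
    linarith [Real.add_one_le_exp (h * C₀)]
  have main := F.eul_pt hX hh0 hω0.le (fun q hq r hr hqr => by
    have := hu q hq r hr (by rw [Real.dist_eq]; exact lt_of_le_of_lt hqr hn1)
    rw [dist_eq_norm] at this
    exact this.le) (n + 1) (by rw [hst]; exact ht.2)
  rw [hst, ← mul_assoc, hNh] at main
  rw [dist_comm, dist_eq_norm]
  refine lt_of_le_of_lt main ?_
  have k1 : (D * Real.exp (C₀ * D) + 1) * ω = η / 2 := by rw [hω]; field_simp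
  have k2 : D * ω * (1 + h * C₀) ^ (n + 1) ≤ D * ω * Real.exp (C₀ * D) := by gcongr
  nlinarith

theorem FieldHyp.flow_meas {d : ℕ} {m : ℝ → P2 d} {v : ℝ → Ed d → Ed d} {s T C₀ A : ℝ}
    (F : FieldHyp m v s T C₀ A) {X : Ed d → ℝ → Ed d} (hX0 : ∀ z, X z s = z)
    (hX : ∀ z, ∀ t ∈ Icc s T, HasDerivAt (X z) (v t (X z t)) t) {t : ℝ} (ht : t ∈ Icc s T) :
    Measurable fun z => X z t := by
  have hts : 0 ≤ t - s := by linarith [ht.1]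
  refine measurable_of_tendsto_metrizable
    (f := fun n : ℕ => eul v s ((t - s) / (n + 1 : ℕ)) (n + 1)) (fun n => ?_) ?_
  · have hC := F.hC
    have : LipschitzWith (Real.toNNReal ((1 + (t - s) / (n + 1 : ℕ) * C₀) ^ (n + 1)))
        (eul v s ((t - s) / (n + 1 : ℕ)) (n + 1)) := by
      refine LipschitzWith.of_dist_le_mul fun x y => ?_
      rw [Real.coe_toNNReal _ (by positivity), dist_eq_norm, dist_eq_norm]
      exact F.eul_lipN (by positivity) (n + 1) x y
    exact this.continuous.measurable
  · rw [tendsto_pi_nhds]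
    intro z
    have := F.eul_pt_tendsto (hX z) ht
    rwa [hX0] at this

theorem FieldHyp.flow_int {d : ℕ} {m : ℝ → P2 d} {v : ℝ → Ed d → Ed d} {s T C₀ A : ℝ}
    (F : FieldHyp m v s T C₀ A) {X : Ed d → ℝ → Ed d} (hX0 : ∀ z, X z s = z)
    (hX : ∀ z, ∀ t ∈ Icc s T, HasDerivAt (X z) (v t (X z t)) t) {t : ℝ} (ht : t ∈ Icc s T)
    {φ : Ed d → ℝ} {L ρ : ℝ} (hL : 0 ≤ L)
    (hρ : 0 ≤ ρ) (hlip : ∀ x y, |φ x - φ y| ≤ L * ‖x - y‖) (hsupp : ∀ x, ρ < ‖x‖ → φ x = 0) :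
    ∫ x, φ x ∂(m t).1 = ∫ z, φ (X z t) ∂(m s).1 := by
  have hts : 0 ≤ t - s := by linarith [ht.1]
  have hC := F.hC
  have := aux_prob (m s)
  have hc := aux_lip_continuous hlip
  have hcs : HasCompactSupport φ :=
    HasCompactSupport.intro (isCompact_closedBall (0 : Ed d) ρ) fun x hx => hsupp x (by simpa using hx)
  obtain ⟨B, hB⟩ := hcs.exists_bound_of_continuous hc
  refine tendsto_nhds_unique (F.eul_tendsto ht hL hρ hlip hsupp) ?_
  refine tendsto_integral_of_dominated_convergence (fun _ => B) (fun n => ?_) (integrable_const _)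
    (fun n => Eventually.of_forall fun x => hB _) (Eventually.of_forall fun z => ?_)
  · refine (aux_lip_integrable (m s) (L := L * (1 + (t - s) / (n + 1 : ℕ) * C₀) ^ (n + 1))
      fun x y => (hlip _ _).trans ?_).aestronglyMeasurable
    rw [mul_assoc]
    gcongr
    exact F.eul_lipN (by positivity) (n + 1) x y
  · have h1 := F.eul_pt_tendsto (hX z) ht
    rw [hX0] at h1
    exact (hc.tendsto _).comp h1


theorem aux_meas_ext {d : ℕ} {μ ν : Measure (Ed d)} [IsFiniteMeasure μ] [IsFiniteMeasure ν]
    (h : ∀ (φ : Ed d → ℝ) (L ρ : ℝ), 0 ≤ L → 0 ≤ ρ → (∀ x y, |φ x - φ y| ≤ L * ‖x - y‖) →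
      (∀ x, ρ < ‖x‖ → φ x = 0) → ∫ x, φ x ∂μ = ∫ x, φ x ∂ν) : μ = ν := by
  have hb : ∀ (F : Set (Ed d)) (ρ : ℝ), 0 ≤ ρ → IsClosed F → F ⊆ Metric.closedBall 0 ρ →
      μ F = ν F := by
    intro F ρ hρ hF hsub
    have hp : ∀ n : ℕ, 0 < (1 : ℝ) / (n + 1) := fun n => by positivity
    have t1 := tendsto_integral_thickenedIndicator_of_isClosed μ hF hp
      tendsto_one_div_add_atTop_nhds_zero_nat
    have t2 := tendsto_integral_thickenedIndicator_of_isClosed ν hF hp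
      tendsto_one_div_add_atTop_nhds_zero_nat
    have e : ∀ n : ℕ, ∫ ω, (thickenedIndicator (hp n) F ω : ℝ) ∂μ =
        ∫ ω, (thickenedIndicator (hp n) F ω : ℝ) ∂ν := by
      intro n
      refine h _ ((Real.toNNReal ((1 : ℝ) / (n + 1)))⁻¹ : ℝ≥0) (ρ + 1 / (n + 1)) (NNReal.coe_nonneg _)
        (by positivity) (fun x y => ?_) (fun x hx => ?_)
      · have := (lipschitzWith_thickenedIndicator (hp n) F).dist_le_mul x y
        rwa [NNReal.dist_eq, dist_eq_norm] at this
      · rw [thickenedIndicator_zero]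
        · simp
        · intro hx'
          rw [Metric.mem_thickening_iff] at hx'
          obtain ⟨z, hz, hxz⟩ := hx'
          have := hsub hz
          rw [mem_closedBall_zero_iff] at this
          rw [dist_eq_norm] at hxz
          have := norm_sub_norm_le x z
          linarith
    have e2 := tendsto_nhds_unique t1 (by simpa only [e] using t2)
    exact (measureReal_eq_measureReal_iff).1 e2
  have key : ∀ F : Set (Ed d), IsClosed F → μ F = ν F := by
    intro F hF
    have hU : F = ⋃ n : ℕ, F ∩ Metric.closedBall 0 (n : ℝ) := by
      rw [← inter_iUnion, Metric.iUnion_closedBall_nat, inter_univ]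
    have hm : Monotone fun n : ℕ => F ∩ Metric.closedBall 0 (n : ℝ) := by
      intro a b hab
      exact inter_subset_inter_right _ (Metric.closedBall_subset_closedBall (by exact_mod_cast hab))
    have t1 := tendsto_measure_iUnion_atTop (μ := μ) hm
    have t2 := tendsto_measure_iUnion_atTop (μ := ν) hm
    rw [← hU] at t1 t2
    refine tendsto_nhds_unique t1 ?_
    refine t2.congr fun n => ?_
    exact (hb _ n (by positivity) (hF.inter Metric.isClosed_closedBall) inter_subset_right).symm
  apply ext_of_generate_finite _ ?_ isPiSystem_isClosed
  · exact fun F hF => key F hF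
  · exact key _ isClosed_univ
  · rw [BorelSpace.measurable_eq (α := Ed d), borel_eq_generateFrom_isClosed]

theorem FieldHyp.flow_map {d : ℕ} {m : ℝ → P2 d} {v : ℝ → Ed d → Ed d} {s T C₀ A : ℝ}
    (F : FieldHyp m v s T C₀ A) {X : Ed d → ℝ → Ed d} (hX0 : ∀ z, X z s = z)
    (hX : ∀ z, ∀ t ∈ Icc s T, HasDerivAt (X z) (v t (X z t)) t) {t : ℝ} (ht : t ∈ Icc s T) :
    (m s).1.map (fun z => X z t) = (m t).1 := by
  have hmeas := F.flow_meas hX0 hX ht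
  have := aux_prob (m t)
  have := aux_prob (m s)
  symm
  have : IsFiniteMeasure ((m s).1.map (fun z => X z t)) := inferInstance
  refine aux_meas_ext fun φ L ρ hL hρ hlip hsupp => ?_
  rw [integral_map hmeas.aemeasurable (aux_lip_continuous hlip).aestronglyMeasurable]
  exact F.flow_int hX0 hX ht hL hρ hlip hsupp


theorem aux_L2_bound {d : ℕ} {μ : Measure (Ed d)} [IsProbabilityMeasure μ] {g k : Ed d → Ed d}
    (hk : MemLp k 2 μ) {α β : ℝ} (hα : 0 ≤ α) (hβ : 0 ≤ β) (h : ∀ z, ‖g z‖ ≤ α + β * ‖k z‖) :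
    (eLpNorm g 2 μ).toReal ≤ α + β * (eLpNorm k 2 μ).toReal := by
  have h1 : eLpNorm g 2 μ ≤ eLpNorm ((fun _ => α) + fun z => β * ‖k z‖) 2 μ :=
    eLpNorm_mono_real h
  have h2 : eLpNorm ((fun _ : Ed d => α) + fun z => β * ‖k z‖) 2 μ ≤
      eLpNorm (fun _ : Ed d => α) 2 μ + eLpNorm (fun z => β * ‖k z‖) 2 μ :=
    eLpNorm_add_le (by fun_prop) (hk.aestronglyMeasurable.norm.const_mul β) (by norm_num)
  have h3 : eLpNorm (fun _ : Ed d => α) 2 μ = ENNReal.ofReal α := by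
    rw [eLpNorm_const _ (by norm_num) (IsProbabilityMeasure.ne_zero μ)]
    simp [Real.enorm_eq_ofReal hα]
  have h4 : eLpNorm (fun z => β * ‖k z‖) 2 μ = ENNReal.ofReal β * eLpNorm k 2 μ := by
    have : (fun z => β * ‖k z‖) = β • fun z => ‖k z‖ := by ext z; simp
    rw [this, eLpNorm_const_smul, eLpNorm_norm, Real.enorm_eq_ofReal hβ]
  rw [h3, h4] at h2
  have h5 := ENNReal.toReal_mono (ENNReal.add_ne_top.2
    ⟨ENNReal.ofReal_ne_top, ENNReal.mul_ne_top ENNReal.ofReal_ne_top hk.eLpNorm_ne_top⟩) (h1.trans h2)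
  rwa [ENNReal.toReal_add ENNReal.ofReal_ne_top
    (ENNReal.mul_ne_top ENNReal.ofReal_ne_top hk.eLpNorm_ne_top), ENNReal.toReal_mul,
    ENNReal.toReal_ofReal hα, ENNReal.toReal_ofReal hβ] at h5

theorem aux_exp_sub (x : ℝ) : Real.exp x - 1 ≤ x * Real.exp x := by
  have h := Real.add_one_le_exp (-x)
  have h2 : Real.exp (-x) * Real.exp x = 1 := by rw [← Real.exp_add]; simp
  nlinarith [Real.exp_pos x]

theorem aux_disp {d : ℕ} {X : ℝ → Ed d} {V : ℝ → Ed d} {a b C₁ M : ℝ} (hab : a ≤ b) (hC₁ : 0 < C₁)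
    (hX : ∀ t ∈ Icc a b, HasDerivAt X (V t) t) (hV : ∀ t ∈ Icc a b, ‖V t‖ ≤ C₁ * (1 + ‖X t‖ + M)) :
    ‖X b - X a‖ ≤ (1 + ‖X a‖ + M) * (Real.exp (C₁ * (b - a)) - 1) := by
  have := norm_le_gronwallBound_of_norm_deriv_right_le (f := fun q => X q - X a) (f' := V) (δ := 0)
    (K := C₁) (ε := C₁ * (1 + ‖X a‖ + M)) (a := a) (b := b)
    (fun q hq => ((hX q hq).continuousAt.sub continuousAt_const).continuousWithinAt)
    (fun q hq => ((hX q ⟨hq.1, hq.2.le⟩).sub_const _).hasDerivWithinAt) (by simp)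
    (fun q hq => by
      refine (hV q ⟨hq.1, hq.2.le⟩).trans ?_
      have : ‖X q‖ ≤ ‖X q - X a‖ + ‖X a‖ := by
        have := norm_add_le (X q - X a) (X a); simpa using this
      nlinarith) b ⟨hab, le_rfl⟩
  rw [gronwallBound_of_K_ne_0 hC₁.ne'] at this
  simp only [zero_mul, zero_add] at this
  rwa [mul_div_cancel_left₀ _ hC₁.ne'] at this

theorem aux_y_bound {y : ℝ → ℝ} {s T C₁ : ℝ} (hC₁ : 0 < C₁)
    (hy0 : ∀ t, 0 ≤ y t) (hyc : ContinuousOn y (Icc s T))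
    (hstep : ∀ a ∈ Icc s T, ∀ b ∈ Icc s T, a ≤ b → ∀ M, (∀ q ∈ Icc a b, y q ≤ M) →
      y b ≤ y a + (1 + y a + M) * (Real.exp (C₁ * (b - a)) - 1)) :
    ∀ t ∈ Icc s T, y t ≤ (y s + C₁ * (t - s)) * Real.exp (2 * C₁ * (t - s)) := by
  intro t ht
  have g := le_gronwallBound_of_liminf_deriv_right_le (f := y) (f' := fun x => C₁ * (1 + 2 * y x))
    (δ := y s) (K := 2 * C₁) (ε := C₁) (a := s) (b := T) hyc ?_ le_rfl
    (fun x _ => by nlinarith) t ht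
  · rw [gronwallBound_of_K_ne_0 (by positivity)] at g
    simp only at g
    have e : C₁ / (2 * C₁) = 1 / 2 := by field_simp
    rw [e] at g
    have := aux_exp_sub (2 * C₁ * (t - s))
    nlinarith
  · intro x hx r hr
    apply Eventually.frequently
    have hx' : x ∈ Icc s T := ⟨hx.1, hx.2.le⟩
    set η := (r - C₁ * (1 + 2 * y x)) / (2 * C₁) with hη
    have hη0 : 0 < η := div_pos (by linarith) (by positivity)
    have hη1 : C₁ * (1 + 2 * y x + η) < r := by
      have : C₁ * η = (r - C₁ * (1 + 2 * y x)) / 2 := by rw [hη]; field_simp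
      nlinarith
    obtain ⟨δ, hδ, hd⟩ := Metric.continuousOn_iff.1 hyc x hx' η hη0
    have ev1 : ∀ᶠ z in 𝓝[>] x, z < x + δ := by
      filter_upwards [Ioo_mem_nhdsGT (show x < x + δ by linarith)] with z hz using hz.2
    have ev2 : ∀ᶠ z in 𝓝[>] x, z < T := by
      filter_upwards [Ioo_mem_nhdsGT hx.2] with z hz using hz.2
    have ev3 : ∀ᶠ z in 𝓝[>] x, C₁ * (1 + 2 * y x + η) * Real.exp (C₁ * (z - x)) < r := by
      have hc : Tendsto (fun z => C₁ * (1 + 2 * y x + η) * Real.exp (C₁ * (z - x))) (𝓝[>] x)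
          (𝓝 (C₁ * (1 + 2 * y x + η) * Real.exp (C₁ * (x - x)))) :=
        (Continuous.tendsto (by fun_prop) x).mono_left nhdsWithin_le_nhds
      rw [sub_self, mul_zero, Real.exp_zero, mul_one] at hc
      exact hc.eventually_lt_const hη1
    filter_upwards [ev1, ev2, ev3, self_mem_nhdsWithin] with z h1 h2 h3 h4
    have h4 : x < z := h4
    have hb := hstep x hx' z ⟨by linarith [hx.1], h2.le⟩ h4.le (y x + η) (fun q hq => by
      have := hd q ⟨by linarith [hx.1, hq.1], by linarith [hq.2]⟩ (by
        rw [Real.dist_eq, abs_of_nonneg (by linarith [hq.1])]; linarith [hq.2])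
      rw [Real.dist_eq] at this
      linarith [(abs_lt.1 this).2])
    have hzx : 0 < z - x := by linarith
    rw [inv_mul_lt_iff₀ hzx]
    have he := aux_exp_sub (C₁ * (z - x))
    have hy := hy0 x
    have : (1 + y x + (y x + η)) * (Real.exp (C₁ * (z - x)) - 1) ≤
      (1 + y x + (y x + η)) * (C₁ * (z - x) * Real.exp (C₁ * (z - x))) := by gcongr
    have h5 := mul_lt_mul_of_pos_left h3 hzx
    nlinarith

/-- estimate on the oscillation of the velocity field along
characteristics. -/
theorem statement19 {d : ℕ} {U : Type*} [MetricSpace U] [CompactSpace U]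
    (f : Ed d → P2 d → U → Ed d) (C₀ C₁ : ℝ) (hC₀ : 0 < C₀) (hC₁ : 0 < C₁)
    (hcont : ∀ (x : Ed d) (μ : P2 d), Continuous fun u : U => f x μ u)
    (hLip : ∀ (x y : Ed d) (μ ν : P2 d) (u : U),
      ‖f x μ u - f y ν u‖ ≤ C₀ * (‖x - y‖ + W2 μ ν))
    (hgrowth : ∀ (x : Ed d) (μ : P2 d) (u : U), ‖f x μ u‖ ≤ C₁ * (1 + ‖x‖ + varsigma2 μ))
    (mhat : P2 d) (R δ : ℝ) (hR : 0 ≤ R) (hδ : 0 < δ) (u : U)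
    (s τ : ℝ) (hτ : 0 < τ) (hτδ : τ < δ)
    (m : ℝ → P2 d) (hsol : SolvesCE f u m s (s + τ))
    (hms : W2 mhat (m s) ≤ R)
    (X : Ed d → ℝ → Ed d) (hX0 : ∀ z : Ed d, X z s = z)
    (hXode : ∀ z : Ed d, ∀ t ∈ Icc s (s + τ), HasDerivAt (X z) (f (X z t) (m t) u) t) :
    ∀ t ∈ Icc s (s + τ),
      Real.sqrt (∫ z, ‖f (X z t) (m t) u - f z (m s) u‖ ^ 2 ∂(m s).1)
        ≤ C3const C₀ C₁ δ (varsigma2 mhat) R * (t - s) := by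
  have hyc : ContinuousOn (fun q => varsigma2 (m q)) (Icc s (s + τ)) :=
    aux_contOn hsol.1 (c := 1) fun q _ q' _ => by
      rw [one_mul, Real.norm_eq_abs]; exact aux_varsigma_sub _ _
  obtain ⟨B, hB⟩ := isCompact_Icc.exists_bound_of_continuousOn hyc
  have hsI : s ∈ Icc s (s + τ) := ⟨le_rfl, by linarith⟩
  have hB0 : 0 ≤ B := (norm_nonneg _).trans (hB s hsI)
  have F : FieldHyp m (fun t x => f x (m t) u) s (s + τ) C₀ (C₁ * (1 + B)) :=
    { hst := by linarith
      hC := hC₀.le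
      hA := by positivity
      lip := fun t t' x y => hLip x y (m t) (m t') u
      growth := fun t ht x => by
        refine (hgrowth x (m t) u).trans ?_
        have h1 : varsigma2 (m t) ≤ B := (le_abs_self _).trans (hB t ht)
        have h2 : 0 ≤ B * ‖x‖ := by positivity
        rw [mul_assoc]
        refine mul_le_mul_of_nonneg_left ?_ hC₁.le
        nlinarith
      cont := hsol.1
      ce := hsol.2 }
  have hprob := aux_prob (m s)
  have hmeas : ∀ a ∈ Icc s (s + τ), Measurable fun z => X z a := fun a ha => F.flow_meas hX0 hXode ha
  have hnorm : ∀ a ∈ Icc s (s + τ),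
      eLpNorm (fun z => X z a) 2 (m s).1 = eLpNorm (fun x : Ed d => x) 2 (m a).1 := by
    intro a ha
    rw [← F.flow_map hX0 hXode ha, eLpNorm_map_measure (by fun_prop) (hmeas a ha).aemeasurable]
    rfl
  have hy : ∀ a ∈ Icc s (s + τ),
      (eLpNorm (fun z => X z a) 2 (m s).1).toReal = varsigma2 (m a) := by
    intro a ha
    rw [hnorm a ha, aux_varsigma]
  have hmem : ∀ a ∈ Icc s (s + τ), MemLp (fun z => X z a) 2 (m s).1 := by
    intro a ha
    refine ⟨(hmeas a ha).aestronglyMeasurable, ?_⟩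
    rw [hnorm a ha]
    exact (aux_memLp (m a)).2
  have hdisp : ∀ a ∈ Icc s (s + τ), ∀ b ∈ Icc s (s + τ), a ≤ b → ∀ M,
      (∀ q ∈ Icc a b, varsigma2 (m q) ≤ M) → ∀ z,
      ‖X z b - X z a‖ ≤ (1 + ‖X z a‖ + M) * (Real.exp (C₁ * (b - a)) - 1) := by
    intro a ha b hb hab M hM z
    refine aux_disp (V := fun q => f (X z q) (m q) u) hab hC₁
      (fun q hq => hXode z q ⟨ha.1.trans hq.1, hq.2.trans hb.2⟩) fun q hq => ?_
    refine (hgrowth _ _ _).trans ?_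
    have := hM q hq
    gcongr
  have hexp : ∀ a b : ℝ, a ≤ b → 0 ≤ Real.exp (C₁ * (b - a)) - 1 := by
    intro a b hab
    have : 0 ≤ C₁ * (b - a) := mul_nonneg hC₁.le (by linarith)
    linarith [Real.one_le_exp this]
  have hybd := aux_y_bound (y := fun q => varsigma2 (m q)) hC₁ (fun q => aux_varsigma_nonneg _) hyc
    (by
      intro a ha b hb hab M hM
      have hM0 : 0 ≤ M := (aux_varsigma_nonneg _).trans (hM a ⟨le_rfl, hab⟩)
      have hc := hexp a b hab
      have := aux_L2_bound (g := fun z => X z b) (hmem a ha)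
        (α := (Real.exp (C₁ * (b - a)) - 1) * (1 + M)) (β := 1 + (Real.exp (C₁ * (b - a)) - 1))
        (by positivity) (by positivity) (fun z => by
          have h1 := hdisp a ha b hb hab M hM z
          have h2 : ‖X z b‖ ≤ ‖X z b - X z a‖ + ‖X z a‖ := by
            have := norm_add_le (X z b - X z a) (X z a); simpa using this
          linarith)
      rw [hy a ha, hy b hb] at this
      linarith)
  have hys : varsigma2 (m s) ≤ varsigma2 mhat + R := by
    have := (abs_le.1 ((aux_varsigma_sub mhat (m s)).trans hms)).1
    linarith
  have hmh := aux_varsigma_nonneg mhat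
  have hS1 : ∀ q ∈ Icc s (s + τ), varsigma2 (m q) ≤
      (C₁ * δ + varsigma2 mhat + R) * Real.exp (2 * C₁ * δ) := by
    intro q hq
    have hq1 : 0 ≤ q - s := by linarith [hq.1]
    have hq2 : q - s ≤ δ := by linarith [hq.2]
    refine (hybd q hq).trans ?_
    have h1 : C₁ * (q - s) ≤ C₁ * δ := mul_le_mul_of_nonneg_left hq2 hC₁.le
    have h2 : Real.exp (2 * C₁ * (q - s)) ≤ Real.exp (2 * C₁ * δ) :=
      Real.exp_le_exp.2 (by nlinarith)
    refine mul_le_mul ?_ h2 (Real.exp_pos _).le (by positivity)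
    linarith
  obtain ⟨S, hS⟩ : ∃ S, S = (C₁ * δ + varsigma2 mhat + R) * Real.exp (2 * C₁ * δ) := ⟨_, rfl⟩
  rw [← hS] at hS1
  have hS0 : 0 ≤ S := (aux_varsigma_nonneg _).trans (hS1 s hsI)
  intro t ht
  have hc := hexp s t ht.1
  have hts : 0 ≤ t - s := by linarith [ht.1]
  have hdm : MemLp (fun z => X z t - z) 2 (m s).1 := (hmem t ht).sub (aux_memLp (m s))
  obtain ⟨D, hD⟩ : ∃ D, D = (eLpNorm (fun z => X z t - z) 2 (m s).1).toReal := ⟨_, rfl⟩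
  have hD0 : 0 ≤ D := hD ▸ ENNReal.toReal_nonneg
  have hD1 : D ≤ C2const C₁ δ (varsigma2 mhat) R * (t - s) := by
    have h1 := aux_L2_bound (g := fun z => X z t - z) (aux_memLp (m s))
        (α := (Real.exp (C₁ * (t - s)) - 1) * (1 + S)) (β := Real.exp (C₁ * (t - s)) - 1)
        (by positivity) hc (fun z => by
          have h1 := hdisp s hsI t ht ht.1 S
            (fun q hq => hS1 q ⟨hq.1, hq.2.trans ht.2⟩) z
          rw [hX0] at h1
          linarith)
    rw [← hD, ← aux_varsigma] at h1
    have h2 : D ≤ (Real.exp (C₁ * (t - s)) - 1) * (1 + 2 * S) := by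
      have := mul_le_mul_of_nonneg_left (hS1 s hsI) hc
      linarith
    have h3 : Real.exp (C₁ * (t - s)) - 1 ≤ C₁ * (t - s) * Real.exp (C₁ * δ) := by
      refine (aux_exp_sub _).trans ?_
      refine mul_le_mul_of_nonneg_left (Real.exp_le_exp.2 ?_) (by positivity)
      exact mul_le_mul_of_nonneg_left (by linarith [ht.2]) hC₁.le
    have h4 : C2const C₁ δ (varsigma2 mhat) R = C₁ * Real.exp (C₁ * δ) * (1 + 2 * S) := by
      rw [C2const, hS]; ring
    rw [h4]
    have := mul_le_mul_of_nonneg_right h3 (show 0 ≤ 1 + 2 * S by positivity)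
    linarith
  have hpm : Measurable fun z : Ed d => (X z t, z) := (hmeas t ht).prodMk measurable_id
  have hW : W2 (m t) (m s) ≤ D := by
    have hcpl : IsCoupling ((m s).1.map fun z => (X z t, z)) (m t) (m s) := by
      constructor
      · rw [Measure.map_map measurable_fst hpm]
        exact F.flow_map hX0 hXode ht
      · rw [Measure.map_map measurable_snd hpm]
        exact Measure.map_id
    refine (aux_W2_le hcpl).trans (le_of_eq ?_)
    rw [eLpNorm_map_measure (by fun_prop) hpm.aemeasurable, hD]
    rfl
  have hgm : Measurable fun z => f (X z t) (m t) u - f z (m s) u :=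
    ((F.continuous t).measurable.comp (hmeas t ht)).sub (F.continuous s).measurable
  have hfin := aux_L2_bound (g := fun z => f (X z t) (m t) u - f z (m s) u) hdm
    (α := C₀ * D) (β := C₀) (by positivity) hC₀.le (fun z => by
      have h1 := hLip (X z t) z (m t) (m s) u
      have h2 := mul_le_mul_of_nonneg_left hW hC₀.le
      linarith)
  rw [← hD, ← aux_sqrt_lint] at hfin
  rw [integral_eq_lintegral_of_nonneg_ae (Eventually.of_forall fun z => by positivity)
    (hgm.norm.pow_const 2).aestronglyMeasurable]
  have he : ∀ z, ENNReal.ofReal (‖f (X z t) (m t) u - f z (m s) u‖ ^ 2) =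
      (‖f (X z t) (m t) u - f z (m s) u‖₊ : ℝ≥0∞) ^ 2 := by
    intro z
    rw [ENNReal.ofReal_pow (norm_nonneg _), ofReal_norm, enorm_eq_nnnorm]
  simp only [he]
  refine hfin.trans ?_
  have h5 : C3const C₀ C₁ δ (varsigma2 mhat) R = C₀ * (2 * C2const C₁ δ (varsigma2 mhat) R) := by
    rw [C3const, C2const]; ring
  rw [h5]
  have := mul_le_mul_of_nonneg_left hD1 hC₀.le
  linarith
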